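/- The Open Coloring Axiom implies that D* is not a continuous image of ℕ*: assume that for every separable metric space X and every symmetric open set K₀ ⊆ X × X disjoint from the diagonal, either there is an uncountable Y ⊆ X such that (y,y') ∈ K₀ for all distinct y, y' ∈ Y, or X is the union of countably many sets Xₙ such that (y,y') ∉ K₀ for all distinct y, y' ∈ Xₙ. Then there is no continuous surjection from ℕ* onto D*, where D = ℕ × (ℕ+1). -/

import Mathlib

open Set Topology Function

noncomputable section

/-- The Open Coloring Axiom: for every separable metric space `X` and every symmetric
open `K₀ ⊆ X × X` disjoint from the diagonal, either there is an uncountable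
`K₀`-homogeneous set, or `X` is a countable union of `K₁`-homogeneous sets. -/
def OpenColoringAxiom : Prop :=
  ∀ (X : Type) [MetricSpace X], TopologicalSpace.SeparableSpace X →
    ∀ K : Set (X × X), IsOpen K → (∀ p ∈ K, (p.2, p.1) ∈ K) → (∀ x : X, (x, x) ∉ K) →
      (∃ Y : Set X, ¬ Y.Countable ∧ ∀ y ∈ Y, ∀ y' ∈ Y, y ≠ y' → (y, y') ∈ K) ∨
      (∃ Xn : ℕ → Set X, (⋃ n, Xn n) = Set.univ ∧
        ∀ n : ℕ, ∀ y ∈ Xn n, ∀ y' ∈ Xn n, y ≠ y' → (y, y') ∉ K)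

/-- The space `D = ℕ × (ℕ + 1)`, where `ℕ + 1` is the one-point compactification of
the discrete space `ℕ`. -/
abbrev SpaceD : Type := ℕ × OnePoint ℕ

/-- The Čech–Stone remainder `ℕ* = βℕ ∖ ℕ` of the discrete space `ℕ`. -/
def NatStar : Set (StoneCech ℕ) :=
  (Set.range (stoneCechUnit : ℕ → StoneCech ℕ))ᶜ

/-- The Čech–Stone remainder `D* = βD ∖ D`. -/
def DStar : Set (StoneCech SpaceD) :=
  (Set.range (stoneCechUnit : SpaceD → StoneCech SpaceD))ᶜ

/-!
A continuous surjection `ℕ* → D*` dualizes to an embedding into `P(ℕ) / Fin` of the reduced power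
`A^ℕ / Fin` of the clopen algebra `A` of `ℕ + 1`, which is countable and infinite. Let `Φ` lift
such an embedding, and index the power by the nodes of the binary tree.

Consider pairs of a branch and a sequence placed along it, and color two pairs if the sequences
agree where the branches run together while their values under `Φ` disagree at a coordinate
belonging to the images of both branches. A homogeneous set for this open coloring is countable,
since all its sequences are restrictions of a single `f`, so that off a finite set `Φ f` dictates
their values. OCA thus covers all pairs by countably many sets without conflicts, and uncountably
many branches leave one along which `Φ` is given, on a comeager set, by countably many functions
continuous there.

No embedding of reduced powers can be uniformized in this way. A generic word codes a base sequence,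
an alternative to it, and a mask that covers their differences. Replace base entries by alternative
ones greedily, as long as the continuous function evaluating the base sequence does not notice.
Comparing the word with a similar one, evaluated by the same functions but with an almost disjoint
mask, shows that all but finitely many coordinates of that function ignore a given entry; as `A` is
infinite, two values of the entry are therefore indistinguishable, and infinitely many replacements
occur. The result differs from the base sequence infinitely often but has the same value under `Φ`
modulo a finite set, contradicting injectivity.
-/

namespace OpenColoring

open Filter PiNat

section Cylinder

variable {C : Type*}

/-- The sequence that agrees with `s` below `N` and with `t` from `N` on; it replaces an initial
segment of `t` by that of `s`. -/
def graft (N : ℕ) (s t : ℕ → C) : ℕ → C := (Finset.range N).piecewise s t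

theorem graft_of_lt {N i : ℕ} (h : i < N) (s t : ℕ → C) : graft N s t i = s i :=
  Finset.piecewise_eq_of_mem _ _ _ (Finset.mem_range.2 h)

theorem graft_of_le {N i : ℕ} (h : N ≤ i) (s t : ℕ → C) : graft N s t i = t i :=
  Finset.piecewise_eq_of_notMem _ _ _ (by simpa using h)

theorem graft_mem_cylinder (N : ℕ) (s t : ℕ → C) : graft N s t ∈ cylinder s N :=
  fun _ hi => graft_of_lt hi s t

theorem graft_congr_left {N : ℕ} {s s' : ℕ → C} (h : s ∈ cylinder s' N) (t : ℕ → C) :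
    graft N s t = graft N s' t := by
  ext i
  rcases lt_or_ge i N with hi | hi
  · rw [graft_of_lt hi, graft_of_lt hi, h i hi]
  · rw [graft_of_le hi, graft_of_le hi]

theorem graft_eq_of_mem_cylinder {N : ℕ} {s t : ℕ → C} (h : t ∈ cylinder s N) :
    graft N s t = t := by
  ext i
  rcases lt_or_ge i N with hi | hi
  · rw [graft_of_lt hi, h i hi]
  · rw [graft_of_le hi]

theorem comp_graft {D : Type*} (g : C → D) (N : ℕ) (s t : ℕ → C) :
    g ∘ graft N s t = graft N (g ∘ s) (g ∘ t) := by
  ext i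
  rcases lt_or_ge i N with hi | hi
  · simp only [comp_apply, graft_of_lt hi]
  · simp only [comp_apply, graft_of_le hi]

theorem mem_cylinder_graft {N n : ℕ} {s s' t t' : ℕ → C} (h : s' ∈ cylinder s N)
    (ht : t' ∈ cylinder t n) : graft N s' t' ∈ cylinder (graft N s t) n := by
  intro i hi
  rcases lt_or_ge i N with hiN | hiN
  · rw [graft_of_lt hiN, graft_of_lt hiN, h i hiN]
  · rw [graft_of_le hiN, graft_of_le hiN, ht i hi]

variable [TopologicalSpace C] [DiscreteTopology C]

theorem cylinder_mem_nhds (s : ℕ → C) (n : ℕ) : cylinder s n ∈ 𝓝 s :=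
  (isOpen_cylinder (fun _ => C) s n).mem_nhds (self_mem_cylinder s n)

theorem mem_nhds_iff_exists_cylinder {s : ℕ → C} {U : Set (ℕ → C)} :
    U ∈ 𝓝 s ↔ ∃ n, cylinder s n ⊆ U := by
  refine ⟨fun h => ?_, fun ⟨n, hn⟩ => mem_of_superset (cylinder_mem_nhds s n) hn⟩
  obtain ⟨_, ⟨t, n, rfl⟩, hs, hU⟩ :=
    (isTopologicalBasis_cylinders fun _ : ℕ => C).mem_nhds_iff.1 h
  exact ⟨n, (mem_cylinder_iff_eq.1 hs).symm ▸ hU⟩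

theorem exists_cylinder_subset_of_mem_nhds {s : ℕ → C} {U : Set (ℕ → C)} (h : U ∈ 𝓝 s) (K : ℕ) :
    ∃ n ≥ K, cylinder s n ⊆ U := by
  obtain ⟨n, hn⟩ := mem_nhds_iff_exists_cylinder.1 h
  exact ⟨max K n, le_max_left _ _, (cylinder_anti s (le_max_right _ _)).trans hn⟩

theorem isOpen_of_forall_cylinder_subset {U : Set (ℕ → C)}
    (h : ∀ s ∈ U, ∃ n, cylinder s n ⊆ U) : IsOpen U :=
  isOpen_iff_mem_nhds.2 fun s hs => mem_nhds_iff_exists_cylinder.2 (h s hs)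

theorem dense_iff_forall_cylinder {U : Set (ℕ → C)} :
    Dense U ↔ ∀ s n, ∃ t ∈ cylinder s n, t ∈ U := by
  refine ⟨fun h s n => ?_, fun h s => mem_closure_iff_nhds.2 fun V hV => ?_⟩
  · obtain ⟨t, ht, htU⟩ := h.exists_mem_open (isOpen_cylinder _ s n) ⟨s, self_mem_cylinder s n⟩
    exact ⟨t, htU, ht⟩
  · obtain ⟨n, hn⟩ := mem_nhds_iff_exists_cylinder.1 hV
    obtain ⟨t, ht, htU⟩ := h s n
    exact ⟨t, hn ht, htU⟩

end Cylinder

section Residual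

variable {X Y : Type*} [TopologicalSpace X] [TopologicalSpace Y]

theorem eventually_residual_mem_interior_closure (S : Set X) :
    ∀ᶠ x in residual X, x ∈ S → x ∈ interior (closure S) := by
  have hdense : Dense (frontier (closure S))ᶜ :=
    interior_eq_empty_iff_dense_compl.1 (interior_frontier isClosed_closure)
  filter_upwards [residual_of_dense_open isClosed_frontier.isOpen_compl hdense] with x hx hxS
  by_contra hxi
  exact hx ⟨subset_closure (subset_closure hxS), hxi⟩

theorem tendsto_residual_of_forall_subset_image {p : X → Y} (hp : Continuous p)
    (himage : ∀ U : Set X, IsOpen U → U.Nonempty → ∃ V ⊆ p '' U, IsOpen V ∧ V.Nonempty) :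
    Tendsto p (residual X) (residual Y) := by
  intro s hs
  obtain ⟨F, hopen, hdense, hcount, hFs⟩ := mem_residual_iff.1 hs
  have hF : ∀ t ∈ F, p ⁻¹' t ∈ residual X := by
    refine fun t ht => residual_of_dense_open ((hopen t ht).preimage hp) ?_
    refine dense_iff_inter_open.2 fun U hU hne => ?_
    obtain ⟨V, hVU, hV, hVne⟩ := himage U hU hne
    obtain ⟨y, hyV, hyt⟩ := (hdense t ht).inter_open_nonempty V hV hVne
    obtain ⟨x, hxU, rfl⟩ := hVU hyV
    exact ⟨x, hxU, hyt⟩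
  refine mem_map.2 (mem_of_superset ((countable_bInter_mem hcount).2 hF) fun x hx => hFs ?_)
  exact mem_sInter.2 fun t ht => mem_iInter₂.1 hx t ht

variable {C D : Type*} [TopologicalSpace C] [DiscreteTopology C]
  [TopologicalSpace D] [DiscreteTopology D]

theorem tendsto_residual_of_forall_cylinder {p : (ℕ → C) → ℕ → D} (hp : Continuous p)
    (himage : ∀ w n, ∃ t N, ∀ s ∈ cylinder t N, ∃ w' ∈ cylinder w n, p w' = s) :
    Tendsto p (residual (ℕ → C)) (residual (ℕ → D)) := by
  refine tendsto_residual_of_forall_subset_image hp fun U hU ⟨w, hw⟩ => ?_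
  obtain ⟨n, hn⟩ := mem_nhds_iff_exists_cylinder.1 (hU.mem_nhds hw)
  obtain ⟨t, N, h⟩ := himage w n
  refine ⟨cylinder t N, fun s hs => ?_, isOpen_cylinder _ t N, t, self_mem_cylinder t N⟩
  obtain ⟨w', hw', rfl⟩ := h s hs
  exact ⟨w', hn hw', rfl⟩

theorem eventually_residual_frequently_of_dense {Q : (ℕ → C) → ℕ → Prop}
    (hlocal : ∀ w N, ∀ w' ∈ cylinder w (N + 1), Q w N → Q w' N)
    (hdense : ∀ w K, ∃ w' ∈ cylinder w K, ∃ N ≥ K, Q w' N) :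
    ∀ᶠ w in residual (ℕ → C), ∃ᶠ N in atTop, Q w N := by
  simp_rw [frequently_atTop]
  refine eventually_countable_forall.2 fun K => ?_
  refine residual_of_dense_open (s := {w | ∃ N ≥ K, Q w N}) ?_ ?_
  · refine isOpen_of_forall_cylinder_subset fun w ⟨N, hN, hQ⟩ => ⟨N + 1, fun w' hw' => ?_⟩
    exact ⟨N, hN, hlocal w N w' hw' hQ⟩
  · refine dense_iff_forall_cylinder.2 fun w n => ?_
    obtain ⟨w', hw', N, hN, hQ⟩ := hdense w (max n K)
    exact ⟨w', cylinder_anti w (le_max_left _ _) hw', N, (le_max_right _ _).trans hN, hQ⟩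

theorem tendsto_graft_residual (N : ℕ) (s : ℕ → C) :
    Tendsto (graft N s) (residual (ℕ → C)) (residual (ℕ → C)) := by
  have hcont : Continuous (graft N s) := by
    refine continuous_iff_continuousAt.2 fun t => ?_
    intro U hU
    obtain ⟨n, hn⟩ := mem_nhds_iff_exists_cylinder.1 hU
    exact mem_nhds_iff_exists_cylinder.2
      ⟨n, fun t' ht' => hn (mem_cylinder_graft (self_mem_cylinder s N) ht')⟩
  refine tendsto_residual_of_forall_cylinder hcont fun t n => ?_
  refine ⟨graft N s t, max n N, fun t' ht' => ⟨graft N t t', fun i hi => ?_, ?_⟩⟩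
  · rcases lt_or_ge i N with hiN | hiN
    · rw [graft_of_lt hiN]
    · rw [graft_of_le hiN, ht' i (by omega), graft_of_le hiN]
  · ext i
    rcases lt_or_ge i N with hiN | hiN
    · rw [graft_of_lt hiN, ht' i (by omega), graft_of_lt hiN]
    · rw [graft_of_le hiN, graft_of_le hiN]

theorem exists_residual_subset_graft_mem [Countable C] {s : Set (ℕ → C)}
    (hs : s ∈ residual (ℕ → C)) :
    ∃ G ∈ residual (ℕ → C), G ⊆ s ∧ ∀ N x, ∀ y ∈ G, graft N x y ∈ G := by
  have hcount : ∀ᶠ y in residual (ℕ → C), ∀ N l x, res x N = l → graft N x y ∈ s := by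
    refine eventually_countable_forall.2 fun N => eventually_countable_forall.2 fun l => ?_
    by_cases hl : ∃ x, res x N = l
    · obtain ⟨x, rfl⟩ := hl
      filter_upwards [tendsto_graft_residual N x hs] with y hy x' hx'
      rw [graft_congr_left (by rw [cylinder_eq_res]; exact hx')]
      exact hy
    · exact Eventually.of_forall fun y x hx => (hl ⟨x, hx⟩).elim
  refine ⟨{y | ∀ N x, graft N x y ∈ s}, ?_, fun y hy => ?_, fun N x y hy M x' => ?_⟩
  · filter_upwards [hcount] with y hy N x using hy N _ x rfl
  · simpa [graft_eq_of_mem_cylinder (self_mem_cylinder y 0)] using hy 0 y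
  · have hcomp : graft M x' (graft N x y) = graft (max M N) (graft M x' (graft N x y)) y := by
      ext i
      rcases lt_or_ge i (max M N) with hi | hi
      · rw [graft_of_lt hi]
      · rw [graft_of_le hi, graft_of_le (by omega), graft_of_le (by omega)]
    exact hcomp ▸ hy _ _

end Residual

section Fusion

theorem exists_limit_of_forall_mem_cylinder {C : Type*} {n : ℕ → ℕ} (hn : StrictMono n)
    {t : ℕ → ℕ → C}
    (ht : ∀ k, t (k + 1) ∈ cylinder (t k) (n k)) : ∃ u, ∀ k, u ∈ cylinder (t k) (n k) := by
  have hle : ∀ {k l}, k ≤ l → t l ∈ cylinder (t k) (n k) := by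
    intro k l hkl
    induction l, hkl using Nat.le_induction with
    | base => exact self_mem_cylinder _ _
    | succ l hkl ih => exact fun i hi => (ht l i (hi.trans_le (hn.monotone hkl))).trans (ih i hi)
  refine ⟨fun i => t (i + 1) i, fun k i hi => ?_⟩
  rcases le_total k (i + 1) with h | h
  · exact hle h i hi
  · exact (hle h i (hn.le_apply (x := i + 1))).symm

variable {C : Type*} [TopologicalSpace C] [DiscreteTopology C]

theorem exists_forall_cylinder_graft_subset {O : Set (ℕ → C)} (hO : IsOpen O) (hd : Dense O)
    {P : Set (ℕ → C)} (hP : P.Finite) (N : ℕ) (t : ℕ → C) :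
    ∃ N' > N, ∃ t' ∈ cylinder t N, ∀ w ∈ P, cylinder (graft N w t') N' ⊆ O := by
  induction P, hP using Set.Finite.induction_on with
  | empty => exact ⟨N + 1, N.lt_succ_self, t, self_mem_cylinder t N, by simp⟩
  | @insert a P _ _ ih =>
    obtain ⟨N', hN', t', ht', hsub⟩ := ih
    obtain ⟨u, hu, huO⟩ := dense_iff_forall_cylinder.1 hd (graft N a t') N'
    obtain ⟨M, hM, hMO⟩ := exists_cylinder_subset_of_mem_nhds (hO.mem_nhds huO) N'
    have hau : graft N a (graft N t u) = u := by
      ext i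
      rcases lt_or_ge i N with hi | hi
      · rw [graft_of_lt hi, hu i (hi.trans hN'), graft_of_lt hi]
      · rw [graft_of_le hi, graft_of_le hi]
    have htu : graft N t u ∈ cylinder t' N' := by
      intro i hi
      rcases lt_or_ge i N with hiN | hiN
      · rw [graft_of_lt hiN, ht' i hiN]
      · rw [graft_of_le hiN, hu i hi, graft_of_le hiN]
    refine ⟨M, hN'.trans_le hM, graft N t u, graft_mem_cylinder N t u, ?_⟩
    rintro w (rfl | hw)
    · rwa [hau]
    · have hmem := mem_cylinder_graft (self_mem_cylinder w N) htu
      refine (cylinder_anti _ hM).trans ?_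
      rw [mem_cylinder_iff_eq.1 hmem]
      exact hsub w hw

theorem exists_forall_two_valued_cylinder_subset {O : Set (ℕ → C)} (hO : IsOpen O) (hd : Dense O)
    (z : C) (N : ℕ) (t : ℕ → C) :
    ∃ N' > N, ∃ t' ∈ cylinder t N, ∀ w : ℕ → C, (∀ i < N, w i = z ∨ w i = t i) →
      cylinder (graft N w t') N' ⊆ O := by
  classical
  have hP : ((fun F : Finset ℕ => F.piecewise t fun _ => z) ''
      ↑(Finset.range N).powerset).Finite := (Finset.finite_toSet _).image _
  obtain ⟨N', hN', t', ht', h⟩ := exists_forall_cylinder_graft_subset hO hd hP N t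
  refine ⟨N', hN', t', ht', fun w hw => ?_⟩
  rw [graft_congr_left (s' := ((Finset.range N).filter fun i => w i = t i).piecewise t fun _ => z)]
  · exact h _ ⟨_, Finset.mem_coe.2 (Finset.mem_powerset.2 (Finset.filter_subset _ _)), rfl⟩
  · intro i hi
    by_cases hwt : w i = t i
    · rw [Finset.piecewise_eq_of_mem _ _ _ (by simp [hi, hwt]), hwt]
    · rw [Finset.piecewise_eq_of_notMem _ _ _ (by simp [hwt]), (hw i hi).resolve_right hwt]

theorem exists_antitone_open_dense_of_mem_residual {S : Set (ℕ → C)} (hS : S ∈ residual (ℕ → C)) :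
    ∃ O : ℕ → Set (ℕ → C), (∀ k, IsOpen (O k) ∧ Dense (O k)) ∧ Antitone O ∧ ⋂ k, O k ⊆ S := by
  obtain ⟨T, hTS, hG, hd⟩ := mem_residual.1 hS
  obtain ⟨f, hf, rfl⟩ := isGδ_iff_eq_iInter_nat.1 hG
  refine ⟨fun k => ⋂ j ∈ Iic k, f j, fun k => ⟨?_, ?_⟩, fun k l hkl => ?_, ?_⟩
  · exact (finite_Iic k).isOpen_biInter fun j _ => hf j
  · exact hd.mono (subset_iInter₂ fun j _ => iInter_subset f j)
  · exact biInter_subset_biInter_left (Iic_subset_Iic.2 hkl)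
  · exact (iInter_mono fun k => biInter_subset_of_mem self_mem_Iic).trans hTS

/-- A fusion argument: below `n k` there are only finitely many prefixes with values in `{z, t i}`,
so one block of `t` can serve all of them. -/
theorem exists_strictMono_forall_mem_of_frequently_eq {S : Set (ℕ → C)}
    (hS : S ∈ residual (ℕ → C)) (z : C) :
    ∃ n : ℕ → ℕ, StrictMono n ∧ ∃ t : ℕ → C, ∀ w : ℕ → C, (∀ i, w i = z ∨ w i = t i) →
      (∃ᶠ k in atTop, ∀ i ∈ Ico (n k) (n (k + 1)), w i = t i) → w ∈ S := by
  obtain ⟨O, hO, hanti, hOS⟩ := exists_antitone_open_dense_of_mem_residual hS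
  choose N' hN' t' ht' hsub using fun k =>
    exists_forall_two_valued_cylinder_subset (hO k).1 (hO k).2 z
  let state : ℕ → ℕ × (ℕ → C) := fun k =>
    k.rec (0, fun _ => z) fun k p => (N' k p.1 p.2, t' k p.1 p.2)
  have hn : StrictMono fun k => (state k).1 := strictMono_nat_of_lt_succ fun k => hN' k _ _
  obtain ⟨t, ht⟩ := exists_limit_of_forall_mem_cylinder (t := fun k => (state k).2) hn
    fun k => ht' k _ _
  refine ⟨_, hn, t, fun w hw hblocks => hOS (mem_iInter.2 fun j => ?_)⟩
  obtain ⟨k, hk, hblock⟩ := frequently_atTop.1 hblocks j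
  refine hanti hk (hsub k _ _ w (fun i hi => ht k i hi ▸ hw i) fun i hi => ?_)
  rcases lt_or_ge i (state k).1 with hik | hik
  · rw [graft_of_lt hik]
  · rw [graft_of_le hik, hblock i ⟨hik, hi⟩, ht (k + 1) i hi]

theorem exists_forall_mem_residual_pairwise_finite {ι : Type*} {S : Set (ℕ → C)}
    (hS : S ∈ residual (ℕ → C)) (z : C) {E : ι → Set ℕ} (hE : ∀ x, (E x).Infinite)
    (hdisj : Pairwise fun x y => (E x ∩ E y).Finite) :
    ∃ W : ι → ℕ → C, (∀ x, W x ∈ S) ∧ Pairwise fun x y => {i | W x i ≠ z ∧ W y i ≠ z}.Finite := by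
  classical
  obtain ⟨n, hn, t, ht⟩ := exists_strictMono_forall_mem_of_frequently_eq hS z
  refine ⟨fun x => (⋃ k ∈ E x, Ico (n k) (n (k + 1))).piecewise t fun _ => z, fun x => ?_,
    fun x y hxy => ?_⟩
  · refine ht _ (fun i => ?_) ?_
    · by_cases hi : i ∈ ⋃ k ∈ E x, Ico (n k) (n (k + 1)) <;> simp [hi]
    · refine (Nat.frequently_atTop_iff_infinite.2 (hE x)).mono fun k hk i hi => ?_
      exact piecewise_eq_of_mem _ _ _ (mem_biUnion hk hi)
  · refine ((hdisj hxy).biUnion fun k _ => finite_Ico (n k) (n (k + 1))).subset ?_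
    rintro i ⟨hx, hy⟩
    obtain ⟨k, hk, hik⟩ := mem_iUnion₂.1 (not_imp_comm.1 (piecewise_eq_of_notMem _ _ _) hx)
    obtain ⟨l, hl, hil⟩ := mem_iUnion₂.1 (not_imp_comm.1 (piecewise_eq_of_notMem _ _ _) hy)
    have hkl : k = l := by
      have h1 := hn.lt_iff_lt.1 (hik.1.trans_lt hil.2)
      have h2 := hn.lt_iff_lt.1 (hil.1.trans_lt hik.2)
      omega
    exact mem_biUnion (show k ∈ E x ∩ E y from ⟨hk, hkl ▸ hl⟩) hik

end Fusion

section Branches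

theorem res_eq_res_iff_of_ne {C : Type*} {x y : ℕ → C} (h : x ≠ y) {m n : ℕ} :
    res x m = res y n ↔ m = n ∧ m ≤ firstDiff x y := by
  constructor
  · intro heq
    obtain rfl : m = n := by simpa using congrArg List.length heq
    refine ⟨rfl, (mem_cylinder_iff_le_firstDiff h m).1 ?_⟩
    rw [mem_cylinder_comm, cylinder_eq_res]
    exact heq.symm
  · rintro ⟨rfl, hm⟩
    have := (mem_cylinder_iff_le_firstDiff h m).2 hm
    rwa [cylinder_eq_res] at this

theorem exists_pairwise_finite_inter :
    ∃ E : (ℕ → Bool) → Set ℕ, (∀ x, (E x).Infinite) ∧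
      Pairwise fun x y => (E x ∩ E y).Finite := by
  refine ⟨fun x => range fun n => Encodable.encode (res x n), fun x => ?_, fun x y hxy => ?_⟩
  · refine infinite_range_of_injective fun m n h => ?_
    simpa using congrArg List.length (Encodable.encode_injective h)
  · refine ((finite_Iic (firstDiff x y)).image fun n => Encodable.encode (res x n)).subset ?_
    rintro _ ⟨⟨m, rfl⟩, n, hn⟩
    obtain ⟨-, hm⟩ := (res_eq_res_iff_of_ne hxy).1 (Encodable.encode_injective hn).symm
    exact ⟨m, hm, rfl⟩

theorem exists_forall_exists_ne_mem_cylinder {ι C L : Type*} [Uncountable ι] [Countable C]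
    [Countable L] (label : ι → L) (W : ι → ℕ → C) :
    ∃ x, ∀ N, ∃ y ≠ x, label y = label x ∧ W y ∈ cylinder (W x) N := by
  by_contra! h
  choose N hN using h
  refine not_countable (Function.Injective.countable
    (f := fun x => (label x, res (W x) (N x))) fun x y hxy => ?_) (α := ι)
  obtain ⟨hlabel, hres⟩ := Prod.mk.inj hxy
  have hlen : N x = N y := by simpa using congrArg List.length hres
  by_contra hne
  refine hN x y (Ne.symm hne) hlabel.symm ?_
  rw [cylinder_eq_res, mem_ofPred_eq, hres, hlen]

end Branches

theorem uncountable_nat_to_bool : Uncountable (ℕ → Bool) := by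
  simpa [← Cardinal.aleph0_lt_mk_iff] using Cardinal.aleph0_lt_continuum

section EmbeddingLift

theorem eventuallyEq_iff_sdiff_eventuallyEq_bot {ι A : Type*} [GeneralizedBooleanAlgebra A]
    {l : Filter ι} {f g : ι → A} : f =ᶠ[l] g ↔ f \ g =ᶠ[l] ⊥ ∧ g \ f =ᶠ[l] ⊥ := by
  simp only [EventuallyEq, ← eventually_and, Pi.sdiff_apply, Pi.bot_apply, sdiff_eq_bot_iff,
    le_antisymm_iff (a := f _)]

/-- `Φ` lifts an embedding of Boolean algebras of the reduced power `A^ι / Fin` into `P(ℕ) / Fin`,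
where a subset of `ℕ` is given by its indicator. A top element need not be preserved, so that
lifts restrict to coordinates. -/
structure IsEmbeddingLift {ι A : Type*} [BooleanAlgebra A] (Φ : (ι → A) → ℕ → Bool) : Prop where
  map_sdiff (f g : ι → A) : Φ (f \ g) =ᶠ[cofinite] Φ f \ Φ g
  eventuallyEq_bot_iff (f : ι → A) : Φ f =ᶠ[cofinite] ⊥ ↔ f =ᶠ[cofinite] ⊥

namespace IsEmbeddingLift

variable {ι κ A : Type*} [BooleanAlgebra A] {Φ : (ι → A) → ℕ → Bool}

theorem eventuallyEq_iff (hΦ : IsEmbeddingLift Φ) {f g : ι → A} :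
    Φ f =ᶠ[cofinite] Φ g ↔ f =ᶠ[cofinite] g := by
  rw [eventuallyEq_iff_sdiff_eventuallyEq_bot, eventuallyEq_iff_sdiff_eventuallyEq_bot (f := f),
    ← hΦ.eventuallyEq_bot_iff, ← hΦ.eventuallyEq_bot_iff]
  exact and_congr ⟨(hΦ.map_sdiff f g).trans, (hΦ.map_sdiff f g).symm.trans⟩
    ⟨(hΦ.map_sdiff g f).trans, (hΦ.map_sdiff g f).symm.trans⟩

theorem map_inf (hΦ : IsEmbeddingLift Φ) (f g : ι → A) :
    Φ (f ⊓ g) =ᶠ[cofinite] Φ f ⊓ Φ g := by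
  rw [← _root_.sdiff_sdiff_right_self, ← _root_.sdiff_sdiff_right_self]
  filter_upwards [hΦ.map_sdiff f g, hΦ.map_sdiff f (f \ g)] with m hfg hffg
  rw [hffg, Pi.sdiff_apply, hfg, Pi.sdiff_apply, Pi.sdiff_apply, Pi.sdiff_apply]

theorem eventually_eq_of_apply_eq_false (hΦ : IsEmbeddingLift Φ) {f g r : ι → A}
    (h : ∀ i, f i ≠ g i → r i = ⊤) : ∀ᶠ m in cofinite, Φ r m = false → Φ f m = Φ g m := by
  have hsdiff : f \ r = g \ r := by
    ext i
    by_cases hi : f i = g i <;> simp [hi, h i]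
  have hΦsdiff := (hΦ.map_sdiff f r).symm.trans (hsdiff ▸ hΦ.map_sdiff g r)
  filter_upwards [hΦsdiff] with m hm hr
  rw [Pi.sdiff_apply, Pi.sdiff_apply, hr] at hm
  simpa only [← bot_eq_false, sdiff_bot] using hm

theorem map_inf_eventuallyEq_bot (hΦ : IsEmbeddingLift Φ) {f g : ι → A}
    (h : f ⊓ g =ᶠ[cofinite] ⊥) : Φ f ⊓ Φ g =ᶠ[cofinite] ⊥ :=
  (hΦ.map_inf f g).symm.trans ((hΦ.eventuallyEq_bot_iff _).2 h)

theorem comp_equiv (hΦ : IsEmbeddingLift Φ) (e : ι ≃ κ) :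
    IsEmbeddingLift fun f : κ → A => Φ (f ∘ e) where
  map_sdiff f g := hΦ.map_sdiff (f ∘ e) (g ∘ e)
  eventuallyEq_bot_iff f := by
    rw [hΦ.eventuallyEq_bot_iff]
    simp only [EventuallyEq, eventually_cofinite, comp_apply, Pi.bot_apply]
    exact ⟨fun h => (h.image e).subset fun k hk => ⟨e.symm k, by simpa using hk, by simp⟩,
      fun h => h.preimage e.injective.injOn⟩

end IsEmbeddingLift

end EmbeddingLift

section PrefixEquiv

variable {C β : Type*} {f : (ℕ → C) → β} {G : Set (ℕ → C)} {L N : ℕ} {s s' t : ℕ → C}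

/-- `s` and `s'` have `f`-indistinguishable prefixes of length `L`: exchanging them in front of a
tail taken from `G` does not change the value of `f`. -/
def PrefixEquiv (f : (ℕ → C) → β) (G : Set (ℕ → C)) (L : ℕ) (s s' : ℕ → C) : Prop :=
  ∀ u ∈ G, f (graft L s u) = f (graft L s' u)

namespace PrefixEquiv

theorem refl (s : ℕ → C) : PrefixEquiv f G L s s := fun _ _ => rfl

theorem symm (h : PrefixEquiv f G L s s') : PrefixEquiv f G L s' s := fun u hu => (h u hu).symm

theorem trans (h : PrefixEquiv f G L s s') (h' : PrefixEquiv f G L s' t) :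
    PrefixEquiv f G L s t := fun u hu => (h u hu).trans (h' u hu)

theorem of_mem_cylinder (h : s ∈ cylinder s' L) : PrefixEquiv f G L s s' :=
  fun u _ => by rw [graft_congr_left h]

theorem mono (hG : ∀ N x, ∀ y ∈ G, graft N x y ∈ G) (hLN : L ≤ N)
    (hs : ∀ i, L ≤ i → s i = s' i) (h : PrefixEquiv f G L s s') : PrefixEquiv f G N s s' := by
  intro u hu
  have hsplit : graft N s u = graft L s (graft N s u) :=
    (graft_eq_of_mem_cylinder ((mem_cylinder_comm _ _ _).1
      (cylinder_anti _ hLN ((mem_cylinder_comm _ _ _).1 (graft_mem_cylinder N s u))))).symm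
  have hsplit' : graft N s' u = graft L s' (graft N s u) := by
    ext i
    rcases lt_or_ge i L with hi | hi
    · rw [graft_of_lt hi, graft_of_lt (hi.trans_le hLN)]
    · rw [graft_of_le hi]
      rcases lt_or_ge i N with hiN | hiN
      · rw [graft_of_lt hiN, graft_of_lt hiN, hs i hi]
      · rw [graft_of_le hiN, graft_of_le hiN]
  rw [hsplit, hsplit']
  exact h _ (hG N s u hu)

theorem congr {r r' : ℕ → C} (hr : r ∈ cylinder s L) (hr' : r' ∈ cylinder s' L) :
    PrefixEquiv f G L r r' ↔ PrefixEquiv f G L s s' :=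
  ⟨fun h => (of_mem_cylinder hr).symm.trans (h.trans (of_mem_cylinder hr')),
    fun h => (of_mem_cylinder hr).trans (h.trans (of_mem_cylinder hr').symm)⟩

theorem graft_prefix (hG : ∀ N x, ∀ y ∈ G, graft N x y ∈ G) (hLN : L ≤ N)
    (h : PrefixEquiv f G L s s') (t : ℕ → C) :
    PrefixEquiv f G N (graft L s t) (graft L s' t) :=
  mono hG hLN (fun i hi => by rw [graft_of_le hi, graft_of_le hi])
    ((congr (graft_mem_cylinder L s t) (graft_mem_cylinder L s' t)).2 h)

end PrefixEquiv

end PrefixEquiv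

section GreedySwap

variable {A : Type*} [BooleanAlgebra A]

/-- One entry of a word coding four sequences: a base sequence, an alternative to it, a mask that
is `⊤` wherever the two differ, and a look-ahead used by `greedySwap`. -/
@[ext]
structure Letter (A : Type*) [BooleanAlgebra A] where
  /-- the entry of the base sequence -/
  base : A
  /-- the entry of the alternative sequence -/
  alt : A
  /-- the entry of the mask -/
  mask : A
  /-- the number of further entries inspected when deciding whether to replace `base` by `alt` -/
  horizon : ℕ
  mask_eq_top : base ≠ alt → mask = ⊤

namespace Letter

instance : TopologicalSpace (Letter A) := ⊥

instance : DiscreteTopology (Letter A) := ⟨rfl⟩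

instance [Countable A] : Countable (Letter A) :=
  Injective.countable (f := fun a : Letter A => (a.base, a.alt, a.mask, a.horizon)) fun a b h => by
    simpa only [Prod.mk.injEq, ← Letter.ext_iff] using h

/-- The letter of horizon `0` with equal base and alternative entry `a` and mask `r`. -/
def plain (a r : A) : Letter A := ⟨a, a, r, 0, fun h => (h rfl).elim⟩

end Letter

/-- No letter among the first `N` of `w` looks ahead beyond position `N`. -/
def Complete (w : ℕ → Letter A) (N : ℕ) : Prop := ∀ i < N, i + (w i).horizon < N

theorem Complete.congr {w w' : ℕ → Letter A} {N : ℕ} (h : Complete w N) (hw : w' ∈ cylinder w N) :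
    Complete w' N := fun i hi => hw i hi ▸ h i hi

theorem exists_forall_lt_add_horizon_lt (w : ℕ → Letter A) (n : ℕ) :
    ∃ M ≥ n, ∀ i < n, i + (w i).horizon < M := by
  obtain ⟨M, hM⟩ := ((finite_Iio n).image fun i => i + (w i).horizon).bddAbove
  exact ⟨max n (M + 1), le_max_left _ _, fun i hi =>
    (Nat.lt_succ_of_le (hM ⟨i, hi, rfl⟩)).trans_le (le_max_right _ _)⟩

theorem exists_complete_graft (w : ℕ → Letter A) (n : ℕ) (a : A) :
    ∃ N ≥ n, Complete (graft n w fun _ => Letter.plain a a) N := by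
  obtain ⟨N, hN, h⟩ := exists_forall_lt_add_horizon_lt w n
  refine ⟨N, hN, fun i hi => ?_⟩
  rcases lt_or_ge i n with hin | hin
  · rw [graft_of_lt hin]
    exact h i hin
  · rw [graft_of_le hin]
    exact hi

variable {β : Type*} (f : (ℕ → A) → β) (G : Set (ℕ → A))

open Classical in
/-- The base sequence of `w` after the greedy treatment of the first entries: the `i`-th one is
replaced by the alternative whenever the resulting prefix of length `i + horizon + 1` remains
`f`-indistinguishable from the current one. -/
def swapStage (w : ℕ → Letter A) : ℕ → ℕ → A
  | 0 => Letter.base ∘ w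
  | i + 1 =>
    if PrefixEquiv f G (i + (w i).horizon + 1) (update (swapStage w i) i (w i).alt) (swapStage w i)
    then update (swapStage w i) i (w i).alt else swapStage w i

/-- The limit of the stages `swapStage f G w`. -/
def greedySwap (w : ℕ → Letter A) : ℕ → A := fun i => swapStage f G w (i + 1) i

variable {f G} {w w' : ℕ → Letter A} {N : ℕ}

theorem swapStage_succ_eq_or (w : ℕ → Letter A) (i : ℕ) :
    swapStage f G w (i + 1) = update (swapStage f G w i) i (w i).alt ∨
      swapStage f G w (i + 1) = swapStage f G w i := by
  classical
  rw [swapStage]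
  exact ite_eq_or_eq _ _ _

theorem swapStage_succ_of_ne (w : ℕ → Letter A) {i j : ℕ} (h : j ≠ i) :
    swapStage f G w (i + 1) j = swapStage f G w i j := by
  rcases swapStage_succ_eq_or (f := f) (G := G) w i with hi | hi
  · rw [hi, update_of_ne h]
  · rw [hi]

theorem swapStage_eq_graft (w : ℕ → Letter A) (k : ℕ) :
    swapStage f G w k = graft k (greedySwap f G w) (Letter.base ∘ w) := by
  induction k with
  | zero => ext i; rw [graft_of_le i.zero_le, swapStage]
  | succ k ih =>
    ext j
    rcases lt_trichotomy j k with h | rfl | h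
    · rw [swapStage_succ_of_ne w h.ne, ih, graft_of_lt h, graft_of_lt (h.trans k.lt_succ_self)]
    · rw [graft_of_lt j.lt_succ_self, greedySwap]
    · rw [swapStage_succ_of_ne w h.ne', ih, graft_of_le h.le, graft_of_le h]

theorem greedySwap_eq_alt {i : ℕ}
    (h : PrefixEquiv f G (i + (w i).horizon + 1)
      (update (swapStage f G w i) i (w i).alt) (swapStage f G w i)) :
    greedySwap f G w i = (w i).alt := by
  rw [greedySwap, swapStage, if_pos h, update_self]

theorem greedySwap_eq_base_of_eq_alt {i : ℕ} (h : (w i).base = (w i).alt) :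
    greedySwap f G w i = (w i).base := by
  rw [greedySwap]
  rcases swapStage_succ_eq_or (f := f) (G := G) w i with hi | hi
  · rw [hi, update_self, h]
  · rw [hi, swapStage_eq_graft, graft_of_le le_rfl, comp_apply]

theorem swapStage_mem_cylinder {k : ℕ} (hw : w' ∈ cylinder w N)
    (hk : ∀ i < k, i + (w i).horizon < N) :
    swapStage f G w' k ∈ cylinder (swapStage f G w k) N := by
  induction k with
  | zero => exact fun i hi => congrArg Letter.base (hw i hi)
  | succ k ih =>
    have hstage := ih fun i hi => hk i (hi.trans k.lt_succ_self)
    have hkN : k + (w k).horizon + 1 ≤ N := hk k k.lt_succ_self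
    have hupdate : update (swapStage f G w' k) k (w k).alt ∈
        cylinder (update (swapStage f G w k) k (w k).alt) N := by
      intro i hi
      by_cases hik : i = k
      · rw [hik, update_self, update_self]
      · rw [update_of_ne hik, update_of_ne hik, hstage i hi]
    rw [swapStage, swapStage, hw k (by omega)]
    rw [PrefixEquiv.congr (cylinder_anti _ hkN hupdate) (cylinder_anti _ hkN hstage)]
    split_ifs
    exacts [hupdate, hstage]

theorem greedySwap_apply_eq {i : ℕ} (hw : w' ∈ cylinder w N)
    (hi : ∀ j < i + 1, j + (w j).horizon < N) : greedySwap f G w' i = greedySwap f G w i :=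
  swapStage_mem_cylinder hw hi i ((Nat.le_add_right _ _).trans_lt (hi i i.lt_succ_self))

theorem Complete.greedySwap_mem_cylinder (h : Complete w N) (hw : w' ∈ cylinder w N) :
    greedySwap f G w' ∈ cylinder (greedySwap f G w) N :=
  fun _ hi => greedySwap_apply_eq hw fun j hj => h j (by omega)

theorem Complete.greedySwap_graft (h : Complete w N) {v : ℕ → Letter A}
    (hv : ∀ i, (v i).base = (v i).alt) :
    greedySwap f G (graft N w v) = graft N (greedySwap f G w) (Letter.base ∘ v) := by
  ext i
  rcases lt_or_ge i N with hi | hi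
  · rw [h.greedySwap_mem_cylinder (graft_mem_cylinder N w v) i hi, graft_of_lt hi]
  · rw [graft_of_le hi, greedySwap_eq_base_of_eq_alt (by rw [graft_of_le hi, hv i]),
      graft_of_le hi, comp_apply]

theorem Complete.prefixEquiv_greedySwap (hG : ∀ N x, ∀ y ∈ G, graft N x y ∈ G)
    (h : Complete w N) : PrefixEquiv f G N (greedySwap f G w) (Letter.base ∘ w) := by
  have hstage : ∀ k ≤ N, PrefixEquiv f G N (swapStage f G w k) (Letter.base ∘ w) := by
    intro k
    induction k with
    | zero => exact fun _ => PrefixEquiv.refl _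
    | succ k ih =>
      intro hk
      refine PrefixEquiv.trans ?_ (ih (by omega))
      rw [swapStage]
      split_ifs with hswap
      · exact PrefixEquiv.mono hG (h k hk) (fun i hi => update_of_ne (by omega) _ _) hswap
      · exact PrefixEquiv.refl _
  have hN := hstage N le_rfl
  rw [swapStage_eq_graft] at hN
  exact (PrefixEquiv.of_mem_cylinder (graft_mem_cylinder _ _ _)).symm.trans hN

theorem Complete.greedySwap_eq_alt (hG : ∀ N x, ∀ y ∈ G, graft N x y ∈ G) {i : ℕ}
    (h : Complete w i) (hi : PrefixEquiv f G (i + (w i).horizon + 1)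
      (update (Letter.base ∘ w) i (w i).alt) (Letter.base ∘ w)) :
    greedySwap f G w i = (w i).alt := by
  refine OpenColoring.greedySwap_eq_alt ?_
  have hprefix : ∀ t ∈ cylinder (Letter.base ∘ w) i, PrefixEquiv f G (i + (w i).horizon + 1)
      (graft i (greedySwap f G w) t) t := fun t ht => by
    simpa only [graft_eq_of_mem_cylinder ht] using
      (h.prefixEquiv_greedySwap hG).graft_prefix hG (by omega) t
  have hupdate : update (graft i (greedySwap f G w) (Letter.base ∘ w)) i (w i).alt =
      graft i (greedySwap f G w) (update (Letter.base ∘ w) i (w i).alt) := by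
    ext j
    rcases lt_trichotomy j i with hj | rfl | hj
    · rw [update_of_ne hj.ne, graft_of_lt hj, graft_of_lt hj]
    · rw [update_self, graft_of_le le_rfl, update_self]
    · rw [update_of_ne hj.ne', graft_of_le hj.le, graft_of_le hj.le, update_of_ne hj.ne']
  rw [swapStage_eq_graft, hupdate]
  exact (hprefix _ (update_mem_cylinder _ i _)).trans
    (hi.trans (hprefix _ (self_mem_cylinder _ i)).symm)

theorem Complete.exists_mem_cylinder_greedySwap_ne (hG : ∀ N x, ∀ y ∈ G, graft N x y ∈ G)
    (h : Complete w N) {i L : ℕ} (hNi : N ≤ i) (hiL : i < L) {v v' : A} (hne : v ≠ v')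
    (hL : PrefixEquiv f G L (update (Letter.base ∘ w) i v) (update (Letter.base ∘ w) i v')) :
    ∃ w' ∈ cylinder w N, greedySwap f G w' i ≠ (w' i).base := by
  let u : ℕ → Letter A := graft N w fun j => Letter.plain (w j).base ⊤
  let a : Letter A := ⟨v', v, ⊤, L - (i + 1), fun _ => rfl⟩
  have hi : update u i a i = a := update_self _ _ _
  have hbase : Letter.base ∘ update u i a = update (Letter.base ∘ w) i v' := by
    rw [comp_update, comp_graft]
    exact congrArg (update · i v') (graft_eq_of_mem_cylinder (self_mem_cylinder _ N))
  have hmem : update u i a ∈ cylinder w N := fun j hj =>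
    (update_of_ne (by omega) _ _).trans (graft_of_lt hj _ _)
  have hcomplete : Complete (update u i a) i := fun j hj => by
    rcases lt_or_ge j N with hjN | hjN
    · exact (h.congr hmem j hjN).trans_le hNi
    · rw [update_of_ne hj.ne, show u j = Letter.plain (w j).base ⊤ from graft_of_le hjN _ _]
      exact hj
  refine ⟨_, hmem, ?_⟩
  rw [hcomplete.greedySwap_eq_alt hG, hi]
  · exact hne
  · rwa [hbase, hi, update_idem, show i + (L - (i + 1)) + 1 = L by omega]

theorem continuous_greedySwap [TopologicalSpace A] : Continuous (greedySwap f G) := by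
  refine continuous_pi fun i => continuous_iff_continuousAt.2 fun w => ?_
  obtain ⟨N, -, hN⟩ := exists_forall_lt_add_horizon_lt w (i + 1)
  refine (continuousAt_const (y := greedySwap f G w i)).congr ?_
  filter_upwards [cylinder_mem_nhds w N] with w' hw'
  exact (greedySwap_apply_eq hw' hN).symm

theorem continuous_comp_letter [TopologicalSpace A] (g : Letter A → A) :
    Continuous fun w : ℕ → Letter A => g ∘ w :=
  continuous_pi fun i => continuous_of_discreteTopology.comp (continuous_apply i)

section Residual

variable [TopologicalSpace A] [DiscreteTopology A]

theorem tendsto_comp_letter_residual {g : Letter A → A} (hg : ∀ a, g (Letter.plain a a) = a) :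
    Tendsto (fun w : ℕ → Letter A => g ∘ w) (residual _) (residual _) := by
  refine tendsto_residual_of_forall_cylinder (continuous_comp_letter g) fun w n => ?_
  refine ⟨g ∘ w, n, fun s hs => ⟨graft n w fun i => Letter.plain (s i) (s i),
    graft_mem_cylinder _ _ _, ?_⟩⟩
  have hplain : (g ∘ fun i => Letter.plain (s i) (s i)) = s := funext fun i => hg (s i)
  rw [comp_graft, hplain, graft_eq_of_mem_cylinder hs]

theorem tendsto_greedySwap_residual :
    Tendsto (greedySwap f G) (residual (ℕ → Letter A)) (residual (ℕ → A)) := by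
  refine tendsto_residual_of_forall_cylinder continuous_greedySwap fun w n => ?_
  obtain ⟨N, hN, hcomplete⟩ := exists_complete_graft w n ⊥
  refine ⟨greedySwap f G (graft n w fun _ => Letter.plain ⊥ ⊥), N, fun s hs =>
    ⟨graft N (graft n w fun _ => Letter.plain ⊥ ⊥) fun i => Letter.plain (s i) (s i),
      fun i hi => ?_, ?_⟩⟩
  · rw [graft_of_lt (hi.trans_le hN), graft_of_lt hi]
  · rw [hcomplete.greedySwap_graft fun _ => rfl]
    exact graft_eq_of_mem_cylinder hs

end Residual

end GreedySwap

section Uniformization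

theorem exists_finset_forall_notMem_of_eventually_cofinite {ι : Type*} {p : ι → Prop}
    (h : ∀ᶠ i in cofinite, p i) : ∃ B : Finset ι, ∀ i ∉ B, p i :=
  ⟨(eventually_cofinite.1 h).toFinset, fun i hi => by simpa using hi⟩

theorem forall_apply_eq_of_mem_closure {X : Type*} [TopologicalSpace X] {S : Set X} {x : X}
    (hx : x ∈ closure S) {g h r : X → ℕ → Bool} (hg : ContinuousAt g x) (hh : ContinuousAt h x)
    (hr : ContinuousAt r x) {B : Finset ℕ}
    (hS : ∀ y ∈ S, ∀ m ∉ B, r y m = false → g y m = h y m) :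
    ∀ m ∉ B, r x m = false → g x m = h x m := by
  have hev : ∀ {k : X → ℕ → Bool}, ContinuousAt k x → ∀ m, ∀ᶠ y in 𝓝 x, k y m = k x m :=
    @fun k hk m => continuousAt_pi.1 hk m ((isOpen_discrete {k x m}).mem_nhds rfl)
  intro m hm hrm
  obtain ⟨y, hyS, hgy, hhy, hry⟩ := ((mem_closure_iff_frequently.1 hx).and_eventually
    ((hev hg m).and ((hev hh m).and (hev hr m)))).exists
  rw [← hgy, ← hhy]
  exact hS y hyS m hm (hry.trans hrm)

variable {A : Type*} [BooleanAlgebra A] [TopologicalSpace A]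

/-- On the set `G`, which is closed under replacing finitely many entries, every value of `Φ` is
the value of one of the functions `f n`, all of which are continuous at the points of `G`. -/
structure IsUniformizedOn (Φ : (ℕ → A) → ℕ → Bool) (f : ℕ → (ℕ → A) → ℕ → Bool)
    (G : Set (ℕ → A)) : Prop where
  graft_mem : ∀ N x, ∀ y ∈ G, graft N x y ∈ G
  continuousAt : ∀ n, ∀ c ∈ G, ContinuousAt (f n) c
  exists_eq : ∀ c ∈ G, ∃ n, Φ c = f n c

/-- The data needed to evaluate a lift `Φ` on the four sequences coded by a word through
continuous functions: an index for each of them, and the finite set of exceptional coordinates. -/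
@[ext]
structure Label where
  /-- the index for the base sequence -/
  base : ℕ
  /-- the index for the alternative sequence -/
  alt : ℕ
  /-- the index for the mask -/
  mask : ℕ
  /-- the index for the greedy swap -/
  swap : ℕ
  /-- the coordinates excluded from the comparisons off the mask -/
  exceptions : Finset ℕ

instance : Countable Label :=
  Injective.countable (f := fun l : Label => (l.base, l.alt, l.mask, l.swap, l.exceptions))
    fun a b h => by simpa only [Prod.mk.injEq, ← Label.ext_iff] using h

/-- The label `l` describes the values of `Φ` on the four sequences coded by `w`. The greedy swap
is taken with respect to the function that evaluates the base sequence. -/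
structure HasLabel (Φ : (ℕ → A) → ℕ → Bool) (f : ℕ → (ℕ → A) → ℕ → Bool) (G : Set (ℕ → A))
    (l : Label) (w : ℕ → Letter A) : Prop where
  map_base : Φ (Letter.base ∘ w) = f l.base (Letter.base ∘ w)
  map_alt : Φ (Letter.alt ∘ w) = f l.alt (Letter.alt ∘ w)
  map_mask : Φ (Letter.mask ∘ w) = f l.mask (Letter.mask ∘ w)
  map_swap : Φ (greedySwap (f l.base) G w) = f l.swap (greedySwap (f l.base) G w)
  base_eq_alt : ∀ m ∉ l.exceptions, Φ (Letter.mask ∘ w) m = false →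
    Φ (Letter.base ∘ w) m = Φ (Letter.alt ∘ w) m
  base_eq_swap : ∀ m ∉ l.exceptions, Φ (Letter.mask ∘ w) m = false →
    Φ (Letter.base ∘ w) m = Φ (greedySwap (f l.base) G w) m

/-- The four sequences coded by `w` lie in `G`. -/
structure CodesIn (f : ℕ → (ℕ → A) → ℕ → Bool) (G : Set (ℕ → A)) (w : ℕ → Letter A) : Prop where
  base_mem : Letter.base ∘ w ∈ G
  alt_mem : Letter.alt ∘ w ∈ G
  mask_mem : Letter.mask ∘ w ∈ G
  swap_mem : ∀ n, greedySwap (f n) G w ∈ G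

variable {Φ : (ℕ → A) → ℕ → Bool} {f : ℕ → (ℕ → A) → ℕ → Bool} {G : Set (ℕ → A)} {l : Label}
  {w : ℕ → Letter A} {N : ℕ}

theorem IsUniformizedOn.exists_hasLabel (hf : IsUniformizedOn Φ f G) (hΦ : IsEmbeddingLift Φ)
    (hw : CodesIn f G w) : ∃ l, HasLabel Φ f G l w := by
  obtain ⟨p, hp⟩ := hf.exists_eq _ hw.base_mem
  obtain ⟨q, hq⟩ := hf.exists_eq _ hw.alt_mem
  obtain ⟨u, hu⟩ := hf.exists_eq _ hw.mask_mem
  obtain ⟨v, hv⟩ := hf.exists_eq _ (hw.swap_mem p)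
  have halt := hΦ.eventually_eq_of_apply_eq_false fun i => (w i).mask_eq_top
  have hswap := hΦ.eventually_eq_of_apply_eq_false (f := Letter.base ∘ w)
    (g := greedySwap (f p) G w) (r := Letter.mask ∘ w) fun i hi =>
    (w i).mask_eq_top (mt greedySwap_eq_base_of_eq_alt hi.symm)
  obtain ⟨B, hB⟩ := exists_finset_forall_notMem_of_eventually_cofinite (halt.and hswap)
  exact ⟨⟨p, q, u, v, B⟩, hp, hq, hu, hv, fun m hm => (hB m hm).1, fun m hm => (hB m hm).2⟩

theorem IsUniformizedOn.continuousAt_comp_letter (hf : IsUniformizedOn Φ f G) (n : ℕ)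
    {g : Letter A → A} (hg : g ∘ w ∈ G) : ContinuousAt (fun w' => f n (g ∘ w')) w :=
  ContinuousAt.comp (hf.continuousAt n _ hg) (continuous_comp_letter g).continuousAt

theorem IsUniformizedOn.base_eq_alt_of_mem_closure (hf : IsUniformizedOn Φ f G)
    (hw : w ∈ closure {w' | HasLabel Φ f G l w'}) (hbase : Letter.base ∘ w ∈ G)
    (halt : Letter.alt ∘ w ∈ G) (hmask : Letter.mask ∘ w ∈ G) :
    ∀ m ∉ l.exceptions, f l.mask (Letter.mask ∘ w) m = false →
      f l.base (Letter.base ∘ w) m = f l.alt (Letter.alt ∘ w) m := by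
  refine forall_apply_eq_of_mem_closure hw (hf.continuousAt_comp_letter l.base hbase)
    (hf.continuousAt_comp_letter l.alt halt) (hf.continuousAt_comp_letter l.mask hmask)
    fun w' hw' m hm => ?_
  rw [← hw'.map_mask, ← hw'.map_base, ← hw'.map_alt]
  exact hw'.base_eq_alt m hm

theorem IsUniformizedOn.base_eq_swap_of_mem_closure (hf : IsUniformizedOn Φ f G)
    (hw : w ∈ closure {w' | HasLabel Φ f G l w'}) (hbase : Letter.base ∘ w ∈ G)
    (hswap : greedySwap (f l.base) G w ∈ G) (hmask : Letter.mask ∘ w ∈ G) :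
    ∀ m ∉ l.exceptions, f l.mask (Letter.mask ∘ w) m = false →
      f l.base (Letter.base ∘ w) m = f l.swap (greedySwap (f l.base) G w) m := by
  refine forall_apply_eq_of_mem_closure hw (hf.continuousAt_comp_letter l.base hbase)
    (ContinuousAt.comp (g := f l.swap) (f := greedySwap (f l.base) G)
      (hf.continuousAt l.swap _ hswap) continuous_greedySwap.continuousAt)
    (hf.continuousAt_comp_letter l.mask hmask) fun w' hw' m hm => ?_
  rw [← hw'.map_mask, ← hw'.map_base, comp_apply, ← hw'.map_swap]
  exact hw'.base_eq_swap m hm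

end Uniformization

section Generic

variable {A : Type*} [BooleanAlgebra A] {Φ : (ℕ → A) → ℕ → Bool} {f : ℕ → (ℕ → A) → ℕ → Bool}
  {G : Set (ℕ → A)} {l : Label} {w e : ℕ → Letter A} {N : ℕ}

/-- Genericity of the word `w` with respect to `Φ`, `f` and `G`; each of the conditions holds for a
comeager set of words. -/
structure IsGeneric (Φ : (ℕ → A) → ℕ → Bool) (f : ℕ → (ℕ → A) → ℕ → Bool) (G : Set (ℕ → A))
    (w : ℕ → Letter A) : Prop extends CodesIn f G w where
  frequently_complete : ∃ᶠ N in atTop, Complete w N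
  frequently_mask_eq_top : ∃ᶠ i in atTop, (w i).mask = ⊤
  mem_interior_closure_hasLabel : ∀ l, HasLabel Φ f G l w →
    w ∈ interior (closure {w' | HasLabel Φ f G l w'})
  mem_interior_swap_eq_base : ∀ n K, (∀ i ≥ K, greedySwap (f n) G w i = (w i).base) →
    w ∈ interior {w' | ∀ i ≥ K, greedySwap (f n) G w' i = (w' i).base}

/-- `e` cannot be told apart from `w` by its first `N` letters and its label `l`. -/
structure IsTwin (Φ : (ℕ → A) → ℕ → Bool) (f : ℕ → (ℕ → A) → ℕ → Bool) (G : Set (ℕ → A))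
    (l : Label) (w : ℕ → Letter A) (N : ℕ) (e : ℕ → Letter A) : Prop where
  mem_cylinder : e ∈ cylinder w N
  hasLabel : HasLabel Φ f G l e
  mask_mem : Letter.mask ∘ e ∈ G

/-- `w` is generic, has the label `l`, and has twins of every length whose mask is almost disjoint
from its own. -/
structure IsTwinned (Φ : (ℕ → A) → ℕ → Bool) (f : ℕ → (ℕ → A) → ℕ → Bool) (G : Set (ℕ → A))
    (l : Label) (w : ℕ → Letter A) : Prop extends IsGeneric Φ f G w where
  hasLabel : HasLabel Φ f G l w
  exists_twin : ∀ N, ∃ e, IsTwin Φ f G l w N e ∧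
    Letter.mask ∘ w ⊓ Letter.mask ∘ e =ᶠ[cofinite] ⊥

theorem IsTwinned.isTwin (hw : IsTwinned Φ f G l w) (N : ℕ) : IsTwin Φ f G l w N w :=
  ⟨self_mem_cylinder w N, hw.hasLabel, hw.mask_mem⟩

theorem IsTwinned.exists_finset_forall_eq (hw : IsTwinned Φ f G l w) (hΦ : IsEmbeddingLift Φ)
    (N : ℕ) : ∃ B : Finset ℕ, ∀ a b : ℕ → Bool, (∀ e, IsTwin Φ f G l w N e →
      ∀ m ∉ l.exceptions, f l.mask (Letter.mask ∘ e) m = false → a m = b m) →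
        ∀ m ∉ B, a m = b m := by
  classical
  obtain ⟨e, he, hdisj⟩ := hw.exists_twin N
  obtain ⟨B, hB⟩ := exists_finset_forall_notMem_of_eventually_cofinite
    (hΦ.map_inf_eventuallyEq_bot hdisj)
  refine ⟨l.exceptions ∪ B, fun a b h m hm => ?_⟩
  obtain ⟨hml, hmB⟩ := not_or.1 (mt Finset.mem_union.2 hm)
  have hinf := hB m hmB
  rw [Pi.inf_apply, hw.hasLabel.map_mask, he.hasLabel.map_mask] at hinf
  rcases Bool.and_eq_false_iff.1 hinf with hm0 | hm0
  · exact h w (hw.isTwin N) m hml hm0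
  · exact h e he m hml hm0

theorem eventually_residual_frequently_complete :
    ∀ᶠ w in residual (ℕ → Letter A), ∃ᶠ N in atTop, Complete w N := by
  refine eventually_residual_frequently_of_dense (fun w N w' hw' hw => ?_) fun w K => ?_
  · exact hw.congr (cylinder_anti w N.le_succ hw')
  · obtain ⟨N, hN, h⟩ := exists_complete_graft w K ⊥
    exact ⟨_, graft_mem_cylinder _ _ _, N, hN, h⟩

theorem eventually_residual_frequently_mask_eq_top :
    ∀ᶠ w in residual (ℕ → Letter A), ∃ᶠ i in atTop, (w i).mask = ⊤ := by
  refine eventually_residual_frequently_of_dense (fun w i w' hw' hw => ?_) fun w K => ?_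
  · rw [hw' i i.lt_succ_self, hw]
  · refine ⟨graft K w fun _ => Letter.plain ⊤ ⊤, graft_mem_cylinder _ _ _, K, le_rfl, ?_⟩
    rw [graft_of_le le_rfl]
    rfl

variable [TopologicalSpace A] [DiscreteTopology A]

theorem eventually_residual_codesIn (f : ℕ → (ℕ → A) → ℕ → Bool) (hG : G ∈ residual (ℕ → A)) :
    ∀ᶠ w in residual (ℕ → Letter A), CodesIn f G w := by
  filter_upwards [tendsto_comp_letter_residual (g := Letter.base) (fun _ => rfl) hG,
    tendsto_comp_letter_residual (g := Letter.alt) (fun _ => rfl) hG,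
    tendsto_comp_letter_residual (g := Letter.mask) (fun _ => rfl) hG,
    eventually_countable_forall.2 fun n => tendsto_greedySwap_residual (f := f n) (G := G) hG]
    with w hbase halt hmask hswap using ⟨hbase, halt, hmask, hswap⟩

theorem isClosed_setOf_greedySwap_eq_base {β : Type*} (g : (ℕ → A) → β) (G : Set (ℕ → A))
    (K : ℕ) : IsClosed {w : ℕ → Letter A | ∀ i ≥ K, greedySwap g G w i = (w i).base} := by
  simp only [ofPred_forall]
  exact isClosed_iInter fun i => isClosed_iInter fun _ =>
    isClosed_eq ((continuous_apply i).comp continuous_greedySwap)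
      ((continuous_apply i).comp (continuous_comp_letter Letter.base))

theorem eventually_residual_isGeneric (Φ : (ℕ → A) → ℕ → Bool) (f : ℕ → (ℕ → A) → ℕ → Bool)
    (hG : G ∈ residual (ℕ → A)) : ∀ᶠ w in residual (ℕ → Letter A), IsGeneric Φ f G w := by
  filter_upwards [eventually_residual_codesIn f hG, eventually_residual_frequently_complete,
    eventually_residual_frequently_mask_eq_top,
    eventually_countable_forall.2 fun l =>
      eventually_residual_mem_interior_closure {w' | HasLabel Φ f G l w'},
    eventually_countable_forall.2 fun n => eventually_countable_forall.2 fun K =>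
      eventually_residual_mem_interior_closure
        {w' | ∀ i ≥ K, greedySwap (f n) G w' i = (w' i).base}]
    with w hcodes hcomplete hmask hlabel hquiet
  refine ⟨hcodes, hcomplete, hmask, hlabel, fun n K hK => ?_⟩
  simpa only [(isClosed_setOf_greedySwap_eq_base (f n) G K).closure_eq] using hquiet n K hK

theorem exists_isTwinned [Countable A] (hΦ : IsEmbeddingLift Φ) (hf : IsUniformizedOn Φ f G)
    (hG : G ∈ residual (ℕ → A)) : ∃ l w, IsTwinned Φ f G l w := by
  have := uncountable_nat_to_bool
  obtain ⟨E, hE, hdisj⟩ := exists_pairwise_finite_inter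
  obtain ⟨W, hW, hfinite⟩ := exists_forall_mem_residual_pairwise_finite
    (eventually_residual_isGeneric Φ f hG) (Letter.plain ⊥ ⊥) hE hdisj
  replace hW : ∀ x, IsGeneric Φ f G (W x) := hW
  choose label hlabel using fun x => hf.exists_hasLabel hΦ (hW x).toCodesIn
  obtain ⟨x, hx⟩ := exists_forall_exists_ne_mem_cylinder label W
  refine ⟨label x, W x, hW x, hlabel x, fun N => ?_⟩
  obtain ⟨y, hyx, hlabel_eq, hy⟩ := hx N
  refine ⟨W y, ⟨hy, hlabel_eq ▸ hlabel y, (hW y).mask_mem⟩, ?_⟩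
  refine (hfinite hyx.symm).subset fun i hi => ⟨fun hx0 => hi ?_, fun hy0 => hi ?_⟩
  · simp [hx0, Letter.plain]
  · simp [hy0, Letter.plain]

end Generic

section Contradiction

theorem exists_cylinder_forall_apply_eq {C : Type*} [TopologicalSpace C] [DiscreteTopology C]
    {g : (ℕ → C) → ℕ → Bool} {s : ℕ → C} (hg : ContinuousAt g s) (B : Finset ℕ) :
    ∃ n, ∀ t ∈ cylinder s n, ∀ m ∈ B, g t m = g s m := by
  refine mem_nhds_iff_exists_cylinder.1 ((eventually_all_finset B).2 fun m _ => ?_)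
  exact continuousAt_pi.1 hg m ((isOpen_discrete {g s m}).mem_nhds rfl)

variable {A : Type*} [BooleanAlgebra A] {Φ : (ℕ → A) → ℕ → Bool} {f : ℕ → (ℕ → A) → ℕ → Bool}
  {G : Set (ℕ → A)} {l : Label} {w e : ℕ → Letter A} {N : ℕ}

theorem IsTwin.mono {N' : ℕ} (he : IsTwin Φ f G l w N' e) (h : N ≤ N') : IsTwin Φ f G l w N e :=
  ⟨cylinder_anti w h he.mem_cylinder, he.hasLabel, he.mask_mem⟩

theorem IsGeneric.exists_complete_cylinder_subset (hw : IsGeneric Φ f G w)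
    {U : Set (ℕ → Letter A)} (hU : U ∈ 𝓝 w) (K : ℕ) :
    ∃ N ≥ K, Complete w N ∧ cylinder w N ⊆ U := by
  obtain ⟨n, hn, hnU⟩ := exists_cylinder_subset_of_mem_nhds hU K
  obtain ⟨N, hN, hcomplete⟩ := frequently_atTop.1 hw.frequently_complete n
  exact ⟨N, hn.trans hN, hcomplete, (cylinder_anti w hN).trans hnU⟩

variable [TopologicalSpace A]

theorem IsTwin.base_eq_alt (he : IsTwin Φ f G l w N e) (hf : IsUniformizedOn Φ f G)
    (hN : cylinder w N ⊆ closure {w' | HasLabel Φ f G l w'}) {s t : ℕ → A} (hsG : s ∈ G)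
    (htG : t ∈ G) (hs : s ∈ cylinder (Letter.base ∘ w) N) (ht : t ∈ cylinder (Letter.alt ∘ w) N)
    (hst : ∀ i, s i ≠ t i → (e i).mask = ⊤) :
    ∀ m ∉ l.exceptions, f l.mask (Letter.mask ∘ e) m = false → f l.base s m = f l.alt t m := by
  let v : ℕ → Letter A := fun i => ⟨s i, t i, (e i).mask, (e i).horizon, hst i⟩
  have hv : v ∈ cylinder w N := fun i hi => by
    have hei := he.mem_cylinder i hi
    exact Letter.ext (hs i hi) (ht i hi) (congrArg (·.mask) hei) (congrArg (·.horizon) hei)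
  exact hf.base_eq_alt_of_mem_closure (w := v) (hN hv) hsG htG he.mask_mem

theorem IsTwin.base_eq_swap (he : IsTwin Φ f G l w N e) (hf : IsUniformizedOn Φ f G)
    (hN : cylinder w N ⊆ closure {w' | HasLabel Φ f G l w'}) (hcomplete : Complete w N)
    (hT : greedySwap (f l.base) G w ∈ G) :
    ∀ m ∉ l.exceptions, f l.mask (Letter.mask ∘ e) m = false →
      f l.base (graft N (Letter.base ∘ w) (greedySwap (f l.base) G w)) m =
        f l.swap (greedySwap (f l.base) G w) m := by
  set T := greedySwap (f l.base) G w
  let v : ℕ → Letter A := graft N w fun i => Letter.plain (T i) (e i).mask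
  have hbase : Letter.base ∘ v = graft N (Letter.base ∘ w) T := comp_graft _ _ _ _
  have hmask : Letter.mask ∘ v = Letter.mask ∘ e := (comp_graft _ _ _ _).trans
    (graft_eq_of_mem_cylinder fun i hi => congrArg (·.mask) (he.mem_cylinder i hi))
  have hswap : greedySwap (f l.base) G v = T := (hcomplete.greedySwap_graft fun _ => rfl).trans
    (graft_eq_of_mem_cylinder (self_mem_cylinder T N))
  have hv := hf.base_eq_swap_of_mem_closure (hN (graft_mem_cylinder N w _ : v ∈ cylinder w N))
  rw [hbase, hmask, hswap] at hv
  exact hv (hf.graft_mem _ _ _ hT) hT he.mask_mem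

namespace IsTwinned

theorem exists_finset_forall_eq_of_eq_off (hw : IsTwinned Φ f G l w) (hf : IsUniformizedOn Φ f G)
    (hΦ : IsEmbeddingLift Φ) (hN : cylinder w N ⊆ closure {w' | HasLabel Φ f G l w'}) {i : ℕ}
    (hi : (w i).mask = ⊤) :
    ∃ B : Finset ℕ, ∀ s ∈ G ∩ cylinder (Letter.base ∘ w) N,
      ∀ s' ∈ G ∩ cylinder (Letter.base ∘ w) N, (∀ j ≠ i, s' j = s j) →
        ∀ m ∉ B, f l.base s m = f l.base s' m := by
  obtain ⟨B, hB⟩ := hw.exists_finset_forall_eq hΦ (max N (i + 1))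
  refine ⟨B, fun s hs s' hs' hss' => hB _ _ fun e he m hm hmask => ?_⟩
  have halt : ∀ r ∈ G ∩ cylinder (Letter.base ∘ w) N, (∀ j ≠ i, r j = s j) →
      f l.base r m = f l.alt (graft N (Letter.alt ∘ w) s) m := by
    intro r hr hrs
    refine (he.mono (le_max_left _ _)).base_eq_alt hf hN hr.1 (hf.graft_mem N _ s hs.1) hr.2
      (graft_mem_cylinder _ _ _) (fun j hj => ?_) m hm hmask
    have hlt : j < max N (i + 1) := by
      by_contra hge
      exact hj (by rw [graft_of_le (by omega), hrs j (by omega)])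
    rw [he.mem_cylinder j hlt]
    by_cases hji : j = i
    · rw [hji, hi]
    · refine (w j).mask_eq_top fun heq => hj ?_
      rcases lt_or_ge j N with hjN | hjN
      · rw [hr.2 j hjN, graft_of_lt hjN]
        exact heq
      · rw [graft_of_le hjN, hrs j hji]
  exact (halt s hs fun _ _ => rfl).trans (halt s' hs' hss').symm

variable [DiscreteTopology A]

theorem exists_ne_prefixEquiv_update [Infinite A] (hw : IsTwinned Φ f G l w)
    (hf : IsUniformizedOn Φ f G) (hΦ : IsEmbeddingLift Φ)
    (hN : cylinder w N ⊆ closure {w' | HasLabel Φ f G l w'}) {i : ℕ} (hNi : N ≤ i)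
    (hi : (w i).mask = ⊤) :
    ∃ v v', v ≠ v' ∧ ∃ L > i, PrefixEquiv (f l.base) G L
      (update (Letter.base ∘ w) i v) (update (Letter.base ∘ w) i v') := by
  set s : A → ℕ → A := update (Letter.base ∘ w) i
  have hs : ∀ v, ∀ j ≠ i, s v j = (w j).base := fun v j hj => update_of_ne hj _ _
  obtain ⟨B, hB⟩ := hw.exists_finset_forall_eq_of_eq_off hf hΦ hN hi
  have hsN : ∀ v, s v ∈ cylinder (Letter.base ∘ w) N := fun v =>
    cylinder_anti _ hNi (update_mem_cylinder (Letter.base ∘ w) i v)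
  have hsG : ∀ v, s v ∈ G := fun v => by
    have hgraft : graft (i + 1) (s v) (Letter.base ∘ w) = s v := by
      ext j
      rcases lt_or_ge j (i + 1) with hj | hj
      · rw [graft_of_lt hj]
      · rw [graft_of_le hj, hs v j (by omega), comp_apply]
    exact hgraft ▸ hf.graft_mem _ _ _ hw.base_mem
  obtain ⟨v, v', hne, hvv'⟩ :=
    Finite.exists_ne_map_eq_of_infinite fun v (m : B) => f l.base (s v) m
  obtain ⟨n, hn⟩ := exists_cylinder_forall_apply_eq (hf.continuousAt l.base _ (hsG v)) B
  obtain ⟨n', hn'⟩ := exists_cylinder_forall_apply_eq (hf.continuousAt l.base _ (hsG v')) B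
  obtain ⟨L, hiL, hnL, hn'L⟩ : ∃ L > i, n ≤ L ∧ n' ≤ L := ⟨max (i + 1) (max n n'), by omega⟩
  refine ⟨v, v', hne, L, hiL, fun u hu => funext fun m => ?_⟩
  by_cases hm : m ∈ B
  · rw [hn _ (cylinder_anti _ hnL (graft_mem_cylinder L _ u)) m hm,
      hn' _ (cylinder_anti _ hn'L (graft_mem_cylinder L _ u)) m hm]
    exact congrFun hvv' ⟨m, hm⟩
  · have hgraft : ∀ v, graft L (s v) u ∈ G ∩ cylinder (Letter.base ∘ w) N := fun v =>
      ⟨hf.graft_mem _ _ _ hu, fun j hj => by rw [graft_of_lt (by omega), hsN v j hj]⟩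
    refine hB _ (hgraft v) _ (hgraft v') (fun j hj => ?_) m hm
    rcases lt_or_ge j L with hjL | hjL
    · rw [graft_of_lt hjL, graft_of_lt hjL, hs v j hj, hs v' j hj]
    · rw [graft_of_le hjL, graft_of_le hjL]

theorem frequently_greedySwap_ne [Infinite A] (hw : IsTwinned Φ f G l w)
    (hf : IsUniformizedOn Φ f G) (hΦ : IsEmbeddingLift Φ) :
    ∃ᶠ i in atTop, greedySwap (f l.base) G w i ≠ (w i).base := by
  intro hquiet
  obtain ⟨K, hK⟩ := eventually_atTop.1 hquiet
  have hlabel := hw.mem_interior_closure_hasLabel l hw.hasLabel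
  have hbase := hw.mem_interior_swap_eq_base l.base K fun i hi => not_not.1 (hK i hi)
  obtain ⟨N, hKN, hcomplete, hN⟩ := hw.exists_complete_cylinder_subset
    (inter_mem (mem_interior_iff_mem_nhds.1 hlabel) (mem_interior_iff_mem_nhds.1 hbase)) K
  obtain ⟨i, hNi, hi⟩ := frequently_atTop.1 hw.frequently_mask_eq_top N
  obtain ⟨v, v', hne, L, hiL, hL⟩ :=
    hw.exists_ne_prefixEquiv_update hf hΦ (hN.trans inter_subset_left) hNi hi
  obtain ⟨w', hw', hne'⟩ :=
    hcomplete.exists_mem_cylinder_greedySwap_ne hf.graft_mem hNi hiL hne hL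
  exact hne' ((hN hw').2 i (hKN.trans hNi))

theorem apply_base_eq_apply_greedySwap (hw : IsTwinned Φ f G l w)
    (hf : IsUniformizedOn Φ f G) :
    f l.base (Letter.base ∘ w) = f l.base (greedySwap (f l.base) G w) := by
  ext m : 1
  obtain ⟨n, hn⟩ :=
    exists_cylinder_forall_apply_eq (hf.continuousAt l.base _ hw.base_mem) {m}
  obtain ⟨N, hnN, hN⟩ := frequently_atTop.1 hw.frequently_complete n
  have hprefix := hN.prefixEquiv_greedySwap (f := f l.base) hf.graft_mem _ (hw.swap_mem l.base)
  rw [graft_eq_of_mem_cylinder (self_mem_cylinder _ N)] at hprefix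
  rw [hprefix, hn _ (cylinder_anti _ hnN (graft_mem_cylinder N _ _)) m
    (Finset.mem_singleton_self m)]

theorem base_eventuallyEq_greedySwap (hw : IsTwinned Φ f G l w) (hf : IsUniformizedOn Φ f G)
    (hΦ : IsEmbeddingLift Φ) :
    Letter.base ∘ w =ᶠ[cofinite] greedySwap (f l.base) G w := by
  obtain ⟨N, -, hcomplete, hN⟩ := hw.exists_complete_cylinder_subset
    (mem_interior_iff_mem_nhds.1 (hw.mem_interior_closure_hasLabel l hw.hasLabel)) 0
  obtain ⟨B, hB⟩ := hw.exists_finset_forall_eq hΦ N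
  have hT := hw.swap_mem l.base
  have hprefix := hcomplete.prefixEquiv_greedySwap (f := f l.base) hf.graft_mem _ hT
  rw [graft_eq_of_mem_cylinder (self_mem_cylinder _ N), ← hw.apply_base_eq_apply_greedySwap hf,
    ← hw.hasLabel.map_base] at hprefix
  rw [← hΦ.eventuallyEq_iff]
  refine B.finite_toSet.subset fun m hm =>
    not_not.1 fun hmB => hm (hB _ _ (fun e he k hk hmask => ?_) m hmB)
  rw [hprefix, hw.hasLabel.map_swap]
  exact he.base_eq_swap hf hN hcomplete hT k hk hmask

end IsTwinned

theorem IsEmbeddingLift.not_eventually_residual_exists_eq [Countable A] [Infinite A]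
    [DiscreteTopology A] (hΦ : IsEmbeddingLift Φ) (f : ℕ → (ℕ → A) → ℕ → Bool) :
    ¬ ∀ᶠ c in residual (ℕ → A), (∀ n, ContinuousAt (f n) c) ∧ ∃ n, Φ c = f n c := by
  intro h
  obtain ⟨G, hG, hGsub, hgraft⟩ := exists_residual_subset_graft_mem h
  have hf : IsUniformizedOn Φ f G :=
    ⟨hgraft, fun n c hc => (hGsub hc).1 n, fun c hc => (hGsub hc).2⟩
  obtain ⟨l, w, hw⟩ := exists_isTwinned hΦ hf hG
  refine hw.frequently_greedySwap_ne hf hΦ ?_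
  rw [← Nat.cofinite_eq_atTop]
  filter_upwards [hw.base_eventuallyEq_greedySwap hf hΦ] with i hi using not_not.2 hi.symm

end Contradiction

section GenericContinuity

variable {X : Type*} [TopologicalSpace X]

theorem eventually_residual_mem_of_subset_closure {P D : Set X} (hD : IsOpen D)
    (h : P ⊆ closure D) : ∀ᶠ c in residual X, c ∈ P → c ∈ D := by
  have hdense : Dense (D ∪ (closure D)ᶜ) := dense_iff_closure_eq.2 <| eq_univ_of_univ_subset <| by
    rw [closure_union, ← union_compl_self (closure D)]
    exact union_subset_union_right _ subset_closure
  filter_upwards [residual_of_dense_open (hD.union isClosed_closure.isOpen_compl) hdense]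
    with c hc hcP using hc.resolve_right (not_not.2 (h hcP))

theorem exists_continuousAt_eq_of_continuousWithinAt {P : Set X} {φ : X → ℕ → Bool}
    (h : ∀ᶠ c in residual X, c ∈ P → ContinuousWithinAt φ P c) :
    ∃ g : X → ℕ → Bool, ∀ᶠ c in residual X, ContinuousAt g c ∧ (c ∈ P → φ c = g c) := by
  classical
  let S : ℕ → Set X := fun m => closure {d | d ∈ P ∧ φ d m = true}
  refine ⟨fun c m => decide (c ∈ S m), ?_⟩
  filter_upwards [h, eventually_countable_forall.2 fun m =>
    eventually_residual_mem_interior_closure (S m)] with c hc hS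
  refine ⟨continuousAt_pi.2 fun m => ?_, fun hcP => funext fun m => ?_⟩
  · refine (continuousAt_const (y := decide (c ∈ S m))).congr ?_
    by_cases hcm : c ∈ S m
    · filter_upwards [mem_interior_iff_mem_nhds.1 (hS m hcm)] with d hd
      rw [isClosed_closure.closure_eq] at hd
      exact decide_eq_decide.2 (iff_of_true hcm hd)
    · filter_upwards [isClosed_closure.isOpen_compl.mem_nhds hcm] with d hd
      exact decide_eq_decide.2 (iff_of_false hcm hd)
  · rw [eq_comm, Bool.eq_iff_iff, decide_eq_true_iff]
    refine ⟨fun hcm => ?_, fun hcm => subset_closure ⟨hcP, hcm⟩⟩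
    have hev : ∀ᶠ d in 𝓝[P] c, φ d m = φ c m := continuousWithinAt_pi.1 (hc hcP) m
      ((isOpen_discrete {φ c m}).mem_nhds rfl)
    obtain ⟨d, ⟨hdP, hdm⟩, hd⟩ := ((mem_closure_iff_frequently.1 hcm).and_eventually
      (eventually_nhdsWithin_iff.1 hev)).exists
    exact (hd hdP).symm.trans hdm

theorem eventually_residual_continuousWithinAt {P : Set X} {φ : X → ℕ → Bool}
    (h : ∀ m, ∀ c ∈ P, ∀ U ∈ 𝓝 c, ∃ d ∈ U, ∃ b, ∀ᶠ d' in 𝓝 d, d' ∈ P → φ d' m = b) :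
    ∀ᶠ c in residual X, c ∈ P → ContinuousWithinAt φ P c := by
  have hopen : ∀ m, IsOpen {d | ∃ b, ∀ᶠ d' in 𝓝 d, d' ∈ P → φ d' m = b} := fun m => by
    rw [ofPred_exists]
    exact isOpen_iUnion fun b => isOpen_setOfPred_eventually_nhds
  filter_upwards [eventually_countable_forall.2 fun m =>
    eventually_residual_mem_of_subset_closure (hopen m) fun c hc => mem_closure_iff_nhds.2
      fun U hU => h m c hc U hU] with c hc hcP
  refine continuousWithinAt_pi.2 fun m => ?_
  obtain ⟨b, hb⟩ := hc m hcP
  refine continuousWithinAt_const.congr_of_eventuallyEq (eventually_nhdsWithin_iff.2 hb) ?_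
  exact hb.self_of_nhds hcP

end GenericContinuity

section Coloring

theorem exists_iUnion_eq_univ_of_injective_code (hOCA : OpenColoringAxiom) {X : Type} {B : Type*}
    [Countable B] {z : X → ℕ → B} (hz : Injective z) {K : X → X → Prop}
    (hsymm : ∀ x y, K x y → K y x) (hirrefl : ∀ x, ¬ K x x)
    (hopen : ∀ x y, K x y →
      ∃ n, ∀ x' y', z x' ∈ cylinder (z x) n → z y' ∈ cylinder (z y) n → K x' y')
    (hcountable : ∀ Y : Set X, Y.Pairwise K → Y.Countable) :
    ∃ P : ℕ → Set X, ⋃ n, P n = univ ∧ ∀ n, (P n).Pairwise fun x y => ¬ K x y := by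
  let _ : TopologicalSpace B := ⊥
  have : DiscreteTopology B := ⟨rfl⟩
  let _ : MetricSpace (ℕ → B) := TopologicalSpace.metrizableSpaceMetric (ℕ → B)
  let _ : MetricSpace X := MetricSpace.induced z hz inferInstance
  have hcont : Continuous z := continuous_induced_dom
  have : SecondCountableTopology X := TopologicalSpace.secondCountableTopology_induced X (ℕ → B) z
  have hK : IsOpen {p : X × X | K p.1 p.2} := isOpen_iff_mem_nhds.2 fun ⟨x, y⟩ hxy => by
    obtain ⟨n, hn⟩ := hopen x y hxy
    exact mem_of_superset (prod_mem_nhds (hcont.continuousAt (cylinder_mem_nhds (z x) n))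
      (hcont.continuousAt (cylinder_mem_nhds (z y) n))) fun p hp => hn p.1 p.2 hp.1 hp.2
  rcases hOCA X inferInstance _ hK (fun p => hsymm p.1 p.2) hirrefl with ⟨Y, hY, hYK⟩ | hP
  · exact (hY (hcountable Y hYK)).elim
  · exact hP

theorem exists_forall_exists_fst_ne {X Y κ L : Type*} [Uncountable X] [Countable κ] [Countable L]
    (P : κ → Set (X × Y)) (label : κ → X × Y → L) :
    ∃ x, ∀ k y, (x, y) ∈ P k → ∃ q ∈ P k, q.1 ≠ x ∧ label k q = label k (x, y) := by
  by_contra! h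
  choose k y hy hunique using h
  refine not_countable (Function.Injective.countable
    (f := fun x => (k x, label (k x) (x, y x))) fun x x' hxx' => ?_) (α := X)
  obtain ⟨hk, hlabel⟩ := Prod.mk.inj hxx'
  by_contra hne
  exact hunique x' (x, y x) (hk ▸ hy x) hne (by rw [← hk, hlabel, hk])

variable {A : Type*} [BooleanAlgebra A]

/-- The sequence `c` placed along the branch `x` of the binary tree, and `⊥` off that branch. -/
def spread (x : ℕ → Bool) (c : ℕ → A) (l : List Bool) : A :=
  if l = res x l.length then c l.length else ⊥

theorem spread_res (x : ℕ → Bool) (c : ℕ → A) (n : ℕ) : spread x c (res x n) = c n := by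
  simp [spread]

theorem spread_sdiff (x : ℕ → Bool) (c d : ℕ → A) :
    spread x (c \ d) = spread x c \ spread x d := by
  ext l
  rw [Pi.sdiff_apply, spread, spread, spread]
  split_ifs <;> simp

theorem spread_inf_spread_top (x : ℕ → Bool) (c : ℕ → A) :
    spread x c ⊓ spread x ⊤ = spread x c := by
  ext l
  rw [Pi.inf_apply, spread, spread]
  split_ifs <;> simp

theorem spread_eventuallyEq_bot_iff {x : ℕ → Bool} {c : ℕ → A} :
    spread x c =ᶠ[cofinite] ⊥ ↔ c =ᶠ[cofinite] ⊥ := by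
  constructor
  · intro h
    have hinj : Injective (res x) := fun m n hmn => by simpa using congrArg List.length hmn
    filter_upwards [hinj.tendsto_cofinite h] with n hn
    exact (spread_res x c n).symm.trans hn
  · intro h
    refine (h.image (res x)).subset fun l hl => ?_
    by_contra hmem
    refine hl (ite_eq_right_iff.2 fun hlx => ?_)
    by_contra hne
    exact hmem ⟨l.length, hne, hlx.symm⟩

/-- The lift of `Φ` to sequences obtained by placing them along the branch `x`, cut off by the
value of `Φ` at the branch itself. -/
def branchLift (Φ : (List Bool → A) → ℕ → Bool) (x : ℕ → Bool) (c : ℕ → A) : ℕ → Bool :=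
  Φ (spread x c) ⊓ Φ (spread x ⊤)

variable {Φ : (List Bool → A) → ℕ → Bool}

theorem IsEmbeddingLift.branchLift_eventuallyEq (hΦ : IsEmbeddingLift Φ) (x : ℕ → Bool)
    (c : ℕ → A) : branchLift Φ x c =ᶠ[cofinite] Φ (spread x c) := by
  have h := (hΦ.map_inf (spread x c) (spread x ⊤)).symm
  rwa [spread_inf_spread_top] at h

theorem isEmbeddingLift_branchLift (hΦ : IsEmbeddingLift Φ) (x : ℕ → Bool) :
    IsEmbeddingLift (branchLift Φ x) where
  map_sdiff c d := by
    have hsdiff := hΦ.map_sdiff (spread x c) (spread x d)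
    rw [← spread_sdiff] at hsdiff
    filter_upwards [hΦ.branchLift_eventuallyEq x (c \ d), hΦ.branchLift_eventuallyEq x c,
      hΦ.branchLift_eventuallyEq x d, hsdiff] with m hcd hc hd hm
    rw [hcd, hm, Pi.sdiff_apply, Pi.sdiff_apply, hc, hd]
  eventuallyEq_bot_iff c := by
    rw [← spread_eventuallyEq_bot_iff (x := x) (c := c), ← hΦ.eventuallyEq_bot_iff]
    exact ⟨(hΦ.branchLift_eventuallyEq x c).symm.trans, (hΦ.branchLift_eventuallyEq x c).trans⟩

/-- The open relation on pairs of a branch and a sequence along it to which the Open Coloring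
Axiom is applied: the sequences agree where both branches run, but their images under `Φ` disagree
at a coordinate that belongs to the images of both branches. -/
structure Conflict (Φ : (List Bool → A) → ℕ → Bool) (p q : (ℕ → Bool) × (ℕ → A)) : Prop where
  fst_ne : p.1 ≠ q.1
  snd_eq : ∀ n, res p.1 n = res q.1 n → p.2 n = q.2 n
  exists_ne : ∃ m, Φ (spread p.1 ⊤) m = true ∧ Φ (spread q.1 ⊤) m = true ∧
    branchLift Φ p.1 p.2 m ≠ branchLift Φ q.1 q.2 m

theorem Conflict.symm {p q : (ℕ → Bool) × (ℕ → A)} (h : Conflict Φ p q) : Conflict Φ q p where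
  fst_ne := h.fst_ne.symm
  snd_eq n hn := (h.snd_eq n hn.symm).symm
  exists_ne := let ⟨m, hp, hq, hne⟩ := h.exists_ne; ⟨m, hq, hp, hne.symm⟩

/-- The entries of `p` together with the values of `Φ` that `Conflict` refers to. -/
def conflictCode (Φ : (List Bool → A) → ℕ → Bool) (p : (ℕ → Bool) × (ℕ → A)) (n : ℕ) :
    Bool × A × Bool × Bool :=
  (p.1 n, p.2 n, Φ (spread p.1 ⊤) n, branchLift Φ p.1 p.2 n)

theorem conflictCode_injective : Injective (conflictCode Φ) := fun _ _ h =>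
  Prod.ext (funext fun n => congrArg (·.1) (congrFun h n))
    (funext fun n => congrArg (·.2.1) (congrFun h n))

theorem Conflict.exists_forall_mem_cylinder {p q : (ℕ → Bool) × (ℕ → A)} (h : Conflict Φ p q) :
    ∃ N, ∀ p' q', conflictCode Φ p' ∈ cylinder (conflictCode Φ p) N →
      conflictCode Φ q' ∈ cylinder (conflictCode Φ q) N → Conflict Φ p' q' := by
  obtain ⟨m, hpm, hqm, hm⟩ := h.exists_ne
  obtain ⟨j, hj⟩ := Function.ne_iff.1 h.fst_ne
  refine ⟨max j m + 1, fun p' q' hp' hq' => ?_⟩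
  have hcode : ∀ {r r' : (ℕ → Bool) × (ℕ → A)},
      conflictCode Φ r' ∈ cylinder (conflictCode Φ r) (max j m + 1) → ∀ n ≤ max j m,
        r'.1 n = r.1 n ∧ r'.2 n = r.2 n ∧ Φ (spread r'.1 ⊤) n = Φ (spread r.1 ⊤) n ∧
          branchLift Φ r'.1 r'.2 n = branchLift Φ r.1 r.2 n := fun hr n hn => by
    simpa only [conflictCode, Prod.mk.injEq] using hr n (Nat.lt_succ_of_le hn)
  have hres : ∀ {r r' : (ℕ → Bool) × (ℕ → A)},
      conflictCode Φ r' ∈ cylinder (conflictCode Φ r) (max j m + 1) → ∀ n ≤ max j m,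
        res r'.1 n = res r.1 n := fun {r r'} hr n hn => by
    have hmem : r'.1 ∈ cylinder r.1 n := fun i hi => (hcode hr i (hi.le.trans hn)).1
    rwa [cylinder_eq_res] at hmem
  obtain ⟨-, -, hpm', hpr⟩ := hcode hp' m (le_max_right _ _)
  obtain ⟨-, -, hqm', hqr⟩ := hcode hq' m (le_max_right _ _)
  have hj' : p'.1 j ≠ q'.1 j := by
    rwa [(hcode hp' j (le_max_left _ _)).1, (hcode hq' j (le_max_left _ _)).1]
  have hne : p'.1 ≠ q'.1 := fun heq => hj' (congrFun heq j)
  refine ⟨hne, fun n hn => ?_, m, hpm'.trans hpm, hqm'.trans hqm, by rwa [hpr, hqr]⟩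
  have hnj : n ≤ j := ((res_eq_res_iff_of_ne hne).1 hn).2.trans
    (not_lt.1 fun hlt => hj' (apply_eq_of_lt_firstDiff hlt))
  have hnN := hnj.trans (le_max_left j m)
  rw [(hcode hp' n hnN).2.1, (hcode hq' n hnN).2.1]
  exact h.snd_eq n (by rw [← hres hp' n hnN, hn, hres hq' n hnN])

theorem exists_forall_inf_spread_top_eq {Y : Set ((ℕ → Bool) × (ℕ → A))}
    (hY : Y.Pairwise fun p q => ∀ n, res p.1 n = res q.1 n → p.2 n = q.2 n) :
    ∃ f : List Bool → A, ∀ p ∈ Y, f ⊓ spread p.1 ⊤ = spread p.1 p.2 := by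
  have hglue : ∀ l : List Bool, ∃ a, ∀ p ∈ Y, l = res p.1 l.length → a = p.2 l.length := by
    intro l
    by_cases h : ∃ p ∈ Y, l = res p.1 l.length
    · obtain ⟨p, hp, hlp⟩ := h
      refine ⟨p.2 l.length, fun q hq hlq => ?_⟩
      obtain rfl | hpq := eq_or_ne p q
      · rfl
      · exact hY hp hq hpq _ (hlp.symm.trans hlq)
    · exact ⟨⊥, fun p hp hlp => (h ⟨p, hp, hlp⟩).elim⟩
  choose f hf using hglue
  refine ⟨f, fun p hp => funext fun l => ?_⟩
  rw [Pi.inf_apply, spread, spread]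
  split_ifs with hl
  · rw [hf l p hp hl, Pi.top_apply, inf_top_eq]
  · exact inf_bot_eq _

theorem IsEmbeddingLift.countable_of_pairwise_conflict (hΦ : IsEmbeddingLift Φ)
    {Y : Set ((ℕ → Bool) × (ℕ → A))} (hY : Y.Pairwise (Conflict Φ)) : Y.Countable := by
  obtain ⟨f, hf⟩ := exists_forall_inf_spread_top_eq (hY.mono' fun p q h => h.snd_eq)
  have hfinite : ∀ p : Y, ∃ E : Finset ℕ, ∀ m ∉ E, Φ (spread p.1.1 ⊤) m = true →
      branchLift Φ p.1.1 p.1.2 m = Φ f m := fun p => by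
    refine exists_finset_forall_notMem_of_eventually_cofinite ?_
    filter_upwards [hΦ.branchLift_eventuallyEq p.1.1 p.1.2, hΦ.map_inf f (spread p.1.1 ⊤)]
      with m hm hinf htop
    rw [hm, ← hf p p.2, hinf, Pi.inf_apply, htop, inf_eq_left]
    exact le_top
  choose E hE using hfinite
  refine countable_coe_iff.1 (Injective.countable
    (f := fun p : Y => (E p, (E p).filter fun m => branchLift Φ p.1.1 p.1.2 m = true))
    fun p q hpq => ?_)
  by_contra hne
  obtain ⟨hEq, hfilter⟩ := Prod.mk.inj hpq
  obtain ⟨m, hpm, hqm, hm⟩ := (hY p.2 q.2 (Subtype.coe_ne_coe.2 hne)).exists_ne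
  refine hm ?_
  by_cases hmE : m ∈ E p
  · have hiff := Finset.ext_iff.1 hfilter m
    rw [Finset.mem_filter, Finset.mem_filter, ← hEq] at hiff
    exact Bool.eq_iff_iff.2 (by simpa only [hmE, true_and] using hiff)
  · rw [hE p m hmE hpm, hE q m (hEq ▸ hmE) hqm]

theorem IsEmbeddingLift.exists_cover_of_openColoringAxiom {A : Type} [BooleanAlgebra A]
    [Countable A] {Φ : (List Bool → A) → ℕ → Bool} (hΦ : IsEmbeddingLift Φ)
    (hOCA : OpenColoringAxiom) : ∃ P : ℕ → Set ((ℕ → Bool) × (ℕ → A)), ⋃ n, P n = univ ∧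
      ∀ n, (P n).Pairwise fun p q => ¬ Conflict Φ p q :=
  exists_iUnion_eq_univ_of_injective_code hOCA conflictCode_injective
    (fun _ _ h => h.symm) (fun _ h => h.fst_ne rfl) (fun _ _ h => h.exists_forall_mem_cylinder)
    fun _ => hΦ.countable_of_pairwise_conflict

theorem eventually_branchLift_eq_of_not_conflict [TopologicalSpace A] [DiscreteTopology A]
    {P : Set ((ℕ → Bool) × (ℕ → A))} (hP : P.Pairwise fun p q => ¬ Conflict Φ p q) {x : ℕ → Bool}
    {q : (ℕ → Bool) × (ℕ → A)} (hq : q ∈ P) (hqx : q.1 ≠ x) {m : ℕ}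
    (hqm : Φ (spread q.1 ⊤) m = Φ (spread x ⊤) m) :
    ∃ b, ∀ᶠ d in 𝓝 q.2, (x, d) ∈ P → branchLift Φ x d m = b := by
  by_cases hm : Φ (spread x ⊤) m = true
  · refine ⟨branchLift Φ q.1 q.2 m, ?_⟩
    filter_upwards [cylinder_mem_nhds q.2 (firstDiff q.1 x + 1)] with d hd hxd
    by_contra hne
    refine hP hxd hq (fun heq => hqx (congrArg Prod.fst heq).symm)
      ⟨hqx.symm, fun n hn => hd n ?_, m, hm, hqm.trans hm, hne⟩
    exact Nat.lt_succ_of_le (((res_eq_res_iff_of_ne hqx).1 hn.symm).2)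
  · refine ⟨false, Eventually.of_forall fun d _ => ?_⟩
    rw [branchLift, Pi.inf_apply, Bool.eq_false_of_not_eq_true hm]
    exact Bool.and_false _

theorem exists_forall_eventually_residual_continuousWithinAt [Countable A] [TopologicalSpace A]
    [DiscreteTopology A] {P : ℕ → Set ((ℕ → Bool) × (ℕ → A))}
    (hP : ∀ n, (P n).Pairwise fun p q => ¬ Conflict Φ p q) :
    ∃ x, ∀ n, ∀ᶠ c in residual (ℕ → A), (x, c) ∈ P n →
      ContinuousWithinAt (branchLift Φ x) {c | (x, c) ∈ P n} c := by
  have := uncountable_nat_to_bool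
  obtain ⟨x, hx⟩ := exists_forall_exists_fst_ne (fun k : ℕ × ℕ × ℕ => P k.1) fun k p =>
    (Φ (spread p.1 ⊤) k.2.1, res p.2 k.2.2)
  refine ⟨x, fun n => eventually_residual_continuousWithinAt fun m c hc U hU => ?_⟩
  obtain ⟨N, hN⟩ := mem_nhds_iff_exists_cylinder.1 hU
  obtain ⟨q, hqP, hqx, hlabel⟩ := hx (n, m, N) c hc
  obtain ⟨hqm, hres⟩ := Prod.mk.inj hlabel
  refine ⟨q.2, hN ?_, eventually_branchLift_eq_of_not_conflict (hP n) hqP hqx hqm⟩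
  rw [cylinder_eq_res]
  exact hres

end Coloring

theorem not_isEmbeddingLift_of_openColoringAxiom (hOCA : OpenColoringAxiom) {ι : Type*}
    [Countable ι] [Infinite ι] {A : Type} [BooleanAlgebra A] [Countable A] [Infinite A]
    (Φ : (ι → A) → ℕ → Bool) : ¬ IsEmbeddingLift Φ := by
  intro hΦ
  let _ : TopologicalSpace A := ⊥
  have : DiscreteTopology A := ⟨rfl⟩
  obtain ⟨e⟩ := nonempty_equiv_of_countable (α := ι) (β := List Bool)
  obtain ⟨P, hcover, hP⟩ := (hΦ.comp_equiv e).exists_cover_of_openColoringAxiom hOCA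
  obtain ⟨x, hx⟩ := exists_forall_eventually_residual_continuousWithinAt hP
  choose g hg using fun n => exists_continuousAt_eq_of_continuousWithinAt (hx n)
  refine (isEmbeddingLift_branchLift (hΦ.comp_equiv e) x).not_eventually_residual_exists_eq g ?_
  filter_upwards [eventually_countable_forall.2 hg] with c hc
  obtain ⟨n, hn⟩ := mem_iUnion.1 (hcover.symm ▸ mem_univ (x, c))
  exact ⟨fun n => (hc n).1, n, (hc n).2 hn⟩

section Remainder

/-- The Čech–Stone remainder of `X`, as a subset of its Čech–Stone compactification. -/
def remainder (X : Type*) [TopologicalSpace X] : Set (StoneCech X) := (range stoneCechUnit)ᶜ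

variable {X Y : Type*} [TopologicalSpace X] [TopologicalSpace Y]

theorem isClosed_remainder [WeaklyLocallyCompactSpace X] [T2Space X] :
    IsClosed (remainder X) := by
  rw [remainder, isClosed_compl_iff, isOpen_iff_mem_nhds]
  rintro _ ⟨x, rfl⟩
  obtain ⟨K, hK, hKx⟩ := exists_compact_mem_nhds x
  let U : Set (StoneCech X) := stoneCechExtend OnePoint.continuous_coe ⁻¹' ((↑) '' interior K)
  have hpreimage : stoneCechUnit ⁻¹' U ⊆ K := fun y hy => by
    obtain ⟨k, hk, hky⟩ := hy
    rw [stoneCechExtend_stoneCechUnit] at hky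
    exact OnePoint.coe_injective hky ▸ interior_subset hk
  have hU : IsOpen U :=
    (OnePoint.isOpen_image_coe.2 isOpen_interior).preimage (continuous_stoneCechExtend _)
  have hxU : stoneCechUnit x ∈ U :=
    ⟨x, mem_interior_iff_mem_nhds.2 hKx, (stoneCechExtend_stoneCechUnit _ x).symm⟩
  refine mem_of_superset (hU.mem_nhds hxU) ?_
  calc U ⊆ closure (stoneCechUnit '' (stoneCechUnit ⁻¹' U)) :=
        denseRange_stoneCechUnit.subset_closure_image_preimage_of_isOpen hU
    _ ⊆ closure (stoneCechUnit '' K) := closure_mono (image_mono hpreimage)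
    _ = stoneCechUnit '' K := (hK.image continuous_stoneCechUnit).isClosed.closure_eq
    _ ⊆ range stoneCechUnit := image_subset_range _ _

theorem eqOn_remainder_of_isCompact_ne [CompactSpace Y] [T2Space Y] {g g' : X → Y}
    (hg : Continuous g) (hg' : Continuous g') (h : IsCompact {x | g x ≠ g' x}) :
    EqOn (stoneCechExtend hg) (stoneCechExtend hg') (remainder X) := by
  have hclosed : IsClosed ({z | stoneCechExtend hg z = stoneCechExtend hg' z} ∪
      stoneCechUnit '' {x | g x ≠ g' x}) :=
    (isClosed_eq (continuous_stoneCechExtend hg) (continuous_stoneCechExtend hg')).union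
      (h.image continuous_stoneCechUnit).isClosed
  have hrange : range (stoneCechUnit : X → StoneCech X) ⊆
      {z | stoneCechExtend hg z = stoneCechExtend hg' z} ∪ stoneCechUnit '' {x | g x ≠ g' x} := by
    rintro _ ⟨x, rfl⟩
    by_cases hx : g x = g' x
    · exact Or.inl (by simpa only [mem_ofPred_eq, stoneCechExtend_stoneCechUnit] using hx)
    · exact Or.inr (mem_image_of_mem _ hx)
  exact fun z hz => (closure_minimal hrange hclosed (denseRange_stoneCechUnit z)).resolve_right
    fun hzne => hz (image_subset_range _ _ hzne)

theorem isClosed_ne [DiscreteTopology Y] {g g' : X → Y} (hg : Continuous g)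
    (hg' : Continuous g') : IsClosed {x | g x ≠ g' x} :=
  (isClosed_discrete {p : Y × Y | p.1 ≠ p.2}).preimage (hg.prodMk hg')

theorem finite_image_ne_of_eqOn_remainder [CompactSpace Y] [DiscreteTopology Y] {ι : Type*}
    [TopologicalSpace ι] [DiscreteTopology ι] {g g' : X → Y} {hg : Continuous g}
    {hg' : Continuous g'} (h : EqOn (stoneCechExtend hg) (stoneCechExtend hg') (remainder X))
    {π : X → ι} (hπ : Continuous π) : (π '' {x | g x ≠ g' x}).Finite := by
  let S : Set (StoneCech X) := {z | stoneCechExtend hg z ≠ stoneCechExtend hg' z}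
  have hS : IsCompact S :=
    (isClosed_ne (continuous_stoneCechExtend hg) (continuous_stoneCechExtend hg')).isCompact
  have hπ' : Continuous fun x => (π x : OnePoint ι) := OnePoint.continuous_coe.comp hπ
  have hrange : stoneCechExtend hπ' '' S ⊆ range ((↑) : ι → OnePoint ι) := by
    rintro _ ⟨z, hz, rfl⟩
    obtain ⟨x, rfl⟩ := not_not.1 fun hzX => hz (h hzX)
    exact ⟨π x, (stoneCechExtend_stoneCechUnit hπ' x).symm⟩
  have hfinite : ((↑) ⁻¹' (stoneCechExtend hπ' '' S) : Set ι).Finite :=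
    ((OnePoint.isOpenEmbedding_coe.isInducing.isCompact_preimage_iff hrange).2
      (hS.image (continuous_stoneCechExtend hπ'))).finite_of_discrete
  refine hfinite.subset ?_
  rintro _ ⟨x, hx, rfl⟩
  refine ⟨stoneCechUnit x, ?_, stoneCechExtend_stoneCechUnit hπ' x⟩
  simpa only [S, mem_ofPred_eq, stoneCechExtend_stoneCechUnit] using hx

theorem stoneCechExtend_eq_of_forall_eq [CompactSpace Y] [T2Space Y] {g : X → Y}
    (hg : Continuous g) {O : Set (StoneCech X)} (hO : IsOpen O) {z : StoneCech X} (hz : z ∈ O)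
    {y : Y} (h : ∀ x, stoneCechUnit x ∈ O → g x = y) : stoneCechExtend hg z = y := by
  have hclosed : IsClosed (stoneCechExtend hg ⁻¹' {y}) :=
    isClosed_singleton.preimage (continuous_stoneCechExtend hg)
  refine closure_minimal ?_ hclosed
    (denseRange_stoneCechUnit.subset_closure_image_preimage_of_isOpen hO hz)
  rintro _ ⟨x, hx, rfl⟩
  exact (stoneCechExtend_stoneCechUnit hg x).trans (h x hx)

theorem stoneCechExtend_eq_sdiff {f g d : X → Bool} (hf : Continuous f) (hg : Continuous g)
    (hd : Continuous d) (h : d = f \ g) :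
    stoneCechExtend hd = stoneCechExtend hf \ stoneCechExtend hg := by
  refine stoneCech_hom_ext (continuous_stoneCechExtend hd) ?_ (funext fun x => ?_)
  · exact (continuous_of_discreteTopology (f := fun p : Bool × Bool => p.1 \ p.2)).comp
      ((continuous_stoneCechExtend hf).prodMk (continuous_stoneCechExtend hg))
  · simp only [comp_apply, Pi.sdiff_apply, stoneCechExtend_stoneCechUnit, h]

theorem exists_stoneCechExtend_eq_of_continuous_remainder [DiscreteTopology X]
    {g : remainder X → Bool} (hg : Continuous g) :
    ∃ h : X → Bool, ∀ u : remainder X,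
      stoneCechExtend (continuous_of_discreteTopology (f := h)) u = g u := by
  classical
  have hclosed : ∀ b, IsClosed (Subtype.val '' (g ⁻¹' {b})) := fun b =>
    isClosed_remainder.isClosedEmbedding_subtypeVal.isClosedMap _
      ((isClosed_discrete {b}).preimage hg)
  have hdisj : Disjoint (Subtype.val '' (g ⁻¹' {true})) (Subtype.val '' (g ⁻¹' {false})) :=
    (disjoint_image_iff Subtype.val_injective).2 ((disjoint_singleton.2 (by decide)).preimage g)
  obtain ⟨U, V, hU, hV, hgU, hgV, hUV⟩ := normal_separation (hclosed true) (hclosed false) hdisj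
  refine ⟨fun x => decide (stoneCechUnit x ∈ U), fun u => ?_⟩
  cases hb : g u
  · exact stoneCechExtend_eq_of_forall_eq _ hV (hgV ⟨u, hb, rfl⟩) fun x hx =>
      decide_eq_false fun hxU => disjoint_left.1 hUV hxU hx
  · exact stoneCechExtend_eq_of_forall_eq _ hU (hgU ⟨u, hb, rfl⟩) fun x hx => decide_eq_true hx

end Remainder

section ProductRemainder

open TopologicalSpace (Clopens)

variable {ι K : Type*} [TopologicalSpace K]

/-- The indicator of the clopen subset of `ι × K` whose slice at `i` is `f i`. -/
def sliceIndicator (f : ι → Clopens K) (p : ι × K) : Bool :=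
  (f p.1 : Set K).boolIndicator p.2

theorem sliceIndicator_sdiff (f g : ι → Clopens K) :
    sliceIndicator (f \ g) = sliceIndicator f \ sliceIndicator g := by
  ext p
  by_cases hf : p.2 ∈ f p.1 <;> by_cases hg : p.2 ∈ g p.1 <;>
    simp [sliceIndicator, boolIndicator, hf, hg, disjoint_iff]

theorem image_fst_sliceIndicator_ne (f g : ι → Clopens K) :
    Prod.fst '' {p | sliceIndicator f p ≠ sliceIndicator g p} = {i | f i ≠ g i} := by
  ext i
  constructor
  · rintro ⟨⟨i, k⟩, hp, rfl⟩ heq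
    exact hp (by rw [sliceIndicator, sliceIndicator, heq])
  · intro hne
    by_contra h
    refine hne (SetLike.ext fun k => ?_)
    have hk : sliceIndicator f (i, k) = sliceIndicator g (i, k) :=
      not_not.1 fun hk => h ⟨(i, k), hk, rfl⟩
    exact (mem_iff_boolIndicator _ k).trans
      (Eq.congr_left hk |>.trans (mem_iff_boolIndicator _ k).symm)

variable [TopologicalSpace ι] [DiscreteTopology ι]

theorem continuous_sliceIndicator (f : ι → Clopens K) : Continuous (sliceIndicator f) :=
  continuous_prod_of_discrete_left.2 fun i =>
    (continuous_boolIndicator_iff_isClopen _).2 (f i).isClopen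

theorem eventuallyEq_iff_eqOn_remainder {g g' : ι → Bool} :
    g =ᶠ[cofinite] g' ↔ EqOn (stoneCechExtend (continuous_of_discreteTopology (f := g)))
      (stoneCechExtend (continuous_of_discreteTopology (f := g'))) (remainder ι) :=
  ⟨fun h => eqOn_remainder_of_isCompact_ne _ _ (Set.Finite.isCompact h), fun h =>
    eventually_cofinite.2 <| by
      simpa only [image_id] using finite_image_ne_of_eqOn_remainder h continuous_id⟩

theorem eventuallyEq_iff_eqOn_remainder_prod [CompactSpace K] {f g : ι → Clopens K} :
    f =ᶠ[cofinite] g ↔ EqOn (stoneCechExtend (continuous_sliceIndicator f))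
      (stoneCechExtend (continuous_sliceIndicator g)) (remainder (ι × K)) := by
  constructor
  · intro h
    refine eqOn_remainder_of_isCompact_ne _ _ ?_
    refine ((Set.Finite.isCompact h).prod isCompact_univ).of_isClosed_subset
      (isClosed_ne (continuous_sliceIndicator f) (continuous_sliceIndicator g)) fun p hp => ?_
    exact ⟨(image_fst_sliceIndicator_ne f g).subset (mem_image_of_mem _ hp), mem_univ _⟩
  · intro h
    rw [EventuallyEq, eventually_cofinite, ← image_fst_sliceIndicator_ne]
    exact finite_image_ne_of_eqOn_remainder h continuous_fst

theorem isEmbeddingLift_of_surjective_remainder [CompactSpace K]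
    {S : remainder ℕ → remainder (ι × K)} (hS : Surjective S) {Φ : (ι → Clopens K) → ℕ → Bool}
    (hΦ : ∀ f (u : remainder ℕ), stoneCechExtend (continuous_of_discreteTopology (f := Φ f)) u =
      stoneCechExtend (continuous_sliceIndicator f) (S u)) : IsEmbeddingLift Φ := by
  have hsdiff : ∀ f g, Φ (f \ g) =ᶠ[cofinite] Φ f \ Φ g := fun f g => by
    refine eventuallyEq_iff_eqOn_remainder.2 fun u hu => ?_
    rw [hΦ _ ⟨u, hu⟩, stoneCechExtend_eq_sdiff continuous_of_discreteTopology
        continuous_of_discreteTopology _ rfl, Pi.sdiff_apply, hΦ f ⟨u, hu⟩, hΦ g ⟨u, hu⟩,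
      stoneCechExtend_eq_sdiff _ _ _ (sliceIndicator_sdiff f g), Pi.sdiff_apply]
  have heq : ∀ {f g}, Φ f =ᶠ[cofinite] Φ g ↔ f =ᶠ[cofinite] g := fun {f g} => by
    rw [eventuallyEq_iff_eqOn_remainder, eventuallyEq_iff_eqOn_remainder_prod]
    refine ⟨fun h z hz => ?_, fun h u hu => ?_⟩
    · obtain ⟨u, hu⟩ := hS ⟨z, hz⟩
      have huz := h u.2
      rwa [hΦ f u, hΦ g u, hu] at huz
    · rw [hΦ f ⟨u, hu⟩, hΦ g ⟨u, hu⟩]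
      exact h (S ⟨u, hu⟩).2
  have hbot : Φ ⊥ =ᶠ[cofinite] ⊥ := by
    simpa only [_root_.sdiff_self] using hsdiff ⊥ ⊥
  exact ⟨hsdiff, fun f => ⟨fun h => heq.1 (h.trans hbot.symm), fun h => (heq.2 h).trans hbot⟩⟩

end ProductRemainder

theorem infinite_clopens_onePoint {X : Type*} [TopologicalSpace X] [DiscreteTopology X]
    [Infinite X] : Infinite (TopologicalSpace.Clopens (OnePoint X)) := by
  have hclopen : ∀ x : X, IsClopen ({↑x} : Set (OnePoint X)) := fun x => by
    rw [← image_singleton]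
    exact ⟨OnePoint.isClosed_image_coe.2 ⟨isClosed_discrete _, isCompact_singleton⟩,
      OnePoint.isOpen_image_coe.2 (isOpen_discrete _)⟩
  refine Infinite.of_injective (fun x => ⟨_, hclopen x⟩) fun x y hxy => ?_
  exact OnePoint.coe_injective (singleton_injective (congrArg (·.carrier) hxy))

end OpenColoring

open OpenColoring in
theorem OCA_implies_DStar_not_image_of_NatStar_general (hOCA : OpenColoringAxiom) {K : Type}
    [TopologicalSpace K] [CompactSpace K] [Countable (TopologicalSpace.Clopens K)]
    [Infinite (TopologicalSpace.Clopens K)] :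
    ¬ ∃ S : remainder ℕ → remainder (ℕ × K), Continuous S ∧ Surjective S := by
  rintro ⟨S, hS, hsurj⟩
  choose Φ hΦ using fun f : ℕ → TopologicalSpace.Clopens K =>
    exists_stoneCechExtend_eq_of_continuous_remainder
      ((continuous_stoneCechExtend (continuous_sliceIndicator f)).comp
        (continuous_subtype_val.comp hS))
  exact not_isEmbeddingLift_of_openColoringAxiom hOCA Φ
    (isEmbeddingLift_of_surjective_remainder hsurj hΦ)

/-- OCA implies that `D*` is not a continuous image of `ℕ*`. -/
theorem OCA_implies_DStar_not_image_of_NatStar (hOCA : OpenColoringAxiom) :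
    ¬ ∃ S : ↥NatStar → ↥DStar, Continuous S ∧ Surjective S := by
  have := TopologicalSpace.Clopens.countable_iff_secondCountable.2
    (inferInstance : SecondCountableTopology (OnePoint ℕ))
  have := OpenColoring.infinite_clopens_onePoint (X := ℕ)
  exact OCA_implies_DStar_not_image_of_NatStar_general hOCA
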